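/- arXiv:1902.00427 — 5 statements merged into one kernel-verified Lean document; each statement's English description precedes it below -/
import Mathlib

section
/- Let (X,μ) be a measure space, S a linear subspace of L¹(X,μ), and Ω ⊆ X a measurable set such that every nonzero s ∈ S satisfies ∫_Ω |s| dμ < (1/2) ∫_X |s| dμ. Let f ∈ S and let N ∈ L¹(X,μ) vanish a.e. outside Ω (the noise is supported in Ω). Then f is the unique minimizer over S of s ↦ ‖(f+N) − s‖_{L¹(X,μ)}: for every s ∈ S one has ‖N‖₁ = ‖(f+N) − f‖₁ ≤ ‖(f+N) − s‖₁, with strict inequality whenever s ≠ f in L¹(X,μ). -/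
open MeasureTheory

/-- **Logan's phenomenon.** Let `(X, μ)` be a measure space, `S` a linear
subspace of `L¹(X, μ)` and `Ω ⊆ X` measurable, such that every nonzero `s ∈ S` satisfies
`∫_Ω |s| dμ < (1/2) ∫_X |s| dμ`.  If `f ∈ S` and the noise `N ∈ L¹(X, μ)` vanishes a.e.
outside `Ω`, then `f` is the unique minimizer over `S` of `s ↦ ‖(f + N) - s‖₁`:
for every `s ∈ S`, `‖N‖₁ = ‖(f+N) - f‖₁ ≤ ‖(f+N) - s‖₁`, with strict inequality
whenever `s ≠ f` in `L¹(X, μ)`. -/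
theorem logan_l1_minimization
    {X : Type*} [MeasurableSpace X] (μ : Measure X)
    (S : Submodule ℂ (X → ℂ)) (hSint : ∀ s ∈ S, Integrable s μ)
    (Ω : Set X) (hΩ : MeasurableSet Ω)
    (hconc : ∀ s ∈ S, ¬ (s =ᵐ[μ] (0 : X → ℂ)) →
      (∫ x in Ω, ‖s x‖ ∂μ) < (1 / 2) * ∫ x, ‖s x‖ ∂μ)
    (f : X → ℂ) (hf : f ∈ S)
    (N : X → ℂ) (hNint : Integrable N μ)
    (hNsupp : ∀ᵐ x ∂μ, x ∉ Ω → N x = 0) :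
    ∀ s ∈ S,
      (∫ x, ‖N x‖ ∂μ) ≤ (∫ x, ‖(f x + N x) - s x‖ ∂μ) ∧
      (¬ (s =ᵐ[μ] f) → (∫ x, ‖N x‖ ∂μ) < ∫ x, ‖(f x + N x) - s x‖ ∂μ) := by
  intro s hs
  have hhS : f - s ∈ S := S.sub_mem hf hs
  have hhint : Integrable (fun x => ‖(f - s) x‖) μ := (hSint _ hhS).norm
  have hind : Integrable (Ω.indicator (fun x => ‖(f - s) x‖)) μ := hhint.indicator hΩ
  have hR : Integrable (fun x => ‖(f x + N x) - s x‖) μ :=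
    (((hSint f hf).add hNint).sub (hSint s hs)).norm
  have key : (∫ x, ‖N x‖ ∂μ) + (∫ x, ‖(f - s) x‖ ∂μ) - 2 * (∫ x in Ω, ‖(f - s) x‖ ∂μ)
      ≤ ∫ x, ‖(f x + N x) - s x‖ ∂μ := by
    have h1 : Integrable (fun x => ‖N x‖ + ‖(f - s) x‖) μ := hNint.norm.add hhint
    have h2 : Integrable (fun x => 2 * Ω.indicator (fun x => ‖(f - s) x‖) x) μ :=
      hind.const_mul 2
    rw [← integral_indicator hΩ, ← integral_add hNint.norm hhint, ← integral_const_mul,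
      ← integral_sub h1 h2]
    refine integral_mono_ae (h1.sub h2) hR ?_
    filter_upwards [hNsupp] with x hx
    by_cases hxΩ : x ∈ Ω
    · have h3 : ‖N x‖ ≤ ‖(f x + N x) - s x‖ + ‖f x - s x‖ := by
        have h4 := norm_sub_le ((f x + N x) - s x) (f x - s x)
        have h5 : (f x + N x) - s x - (f x - s x) = N x := by ring
        rwa [h5] at h4
      simp only [Set.indicator_of_mem hxΩ, Pi.sub_apply]
      linarith
    · simp [Set.indicator_of_notMem hxΩ, hx hxΩ]
  have strict : ¬ (s =ᵐ[μ] f) →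
      (∫ x, ‖N x‖ ∂μ) < ∫ x, ‖(f x + N x) - s x‖ ∂μ := by
    intro hne
    have h6 := hconc (f - s) hhS (fun h0 => hne (by
      filter_upwards [h0] with x hx
      exact (sub_eq_zero.mp hx).symm))
    linarith
  refine ⟨?_, strict⟩
  by_cases he : s =ᵐ[μ] f
  · refine le_of_eq (integral_congr_ae ?_)
    filter_upwards [he] with x hx
    simp [hx]
  · exact (strict he).le
end

section
/- Let (X,μ) be a measure space, S a linear subspace of L¹(X,μ), and Ω ⊆ X a measurable set such that every nonzero s ∈ S satisfies ∫_Ω |s| dμ < (1/2) ∫_X |s| dμ. Let f ∈ S. Then any s ∈ S that agrees with f μ-a.e. on the complement Ω^c equals f in L¹(X,μ); in particular, f is the unique solution of the minimization problem min{‖s‖₁ : s ∈ S, s = f a.e. on Ω^c}, so f can be perfectly reconstructed from its restriction to Ω^c. -/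
open MeasureTheory

/-- **Donoho–Stark type reconstruction.** Let `(X, μ)` be a measure space,
`S` a linear subspace of `L¹(X, μ)` and `Ω ⊆ X` measurable, such that every nonzero
`s ∈ S` satisfies `∫_Ω |s| dμ < (1/2) ∫_X |s| dμ`.  Then for `f ∈ S`, any `s ∈ S`
agreeing with `f` μ-a.e. on `Ωᶜ` equals `f` in `L¹(X, μ)`; in particular `f` is the
unique solution of `min {‖s‖₁ : s ∈ S, s = f a.e. on Ωᶜ}`, i.e. `f` is perfectly
reconstructed from its restriction to `Ωᶜ`. -/
theorem donoho_stark_l1_reconstruction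
    {X : Type*} [MeasurableSpace X] (μ : Measure X)
    (S : Submodule ℂ (X → ℂ)) (hSint : ∀ s ∈ S, Integrable s μ)
    (Ω : Set X) (hΩ : MeasurableSet Ω)
    (hconc : ∀ s ∈ S, ¬ (s =ᵐ[μ] (0 : X → ℂ)) →
      (∫ x in Ω, ‖s x‖ ∂μ) < (1 / 2) * ∫ x, ‖s x‖ ∂μ)
    (f : X → ℂ) (hf : f ∈ S) :
    ∀ s ∈ S, (∀ᵐ x ∂μ, x ∈ Ωᶜ → s x = f x) → s =ᵐ[μ] f := by
  intro s hs hsf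
  by_contra hne
  have hd : s - f ∈ S := S.sub_mem hs hf
  have hnz : ¬ ((s - f) =ᵐ[μ] (0 : X → ℂ)) := by
    intro h
    apply hne
    filter_upwards [h] with x hx
    exact sub_eq_zero.mp hx
  have hlt := hconc (s - f) hd hnz
  have heq : (∫ x in Ω, ‖(s - f) x‖ ∂μ) = ∫ x, ‖(s - f) x‖ ∂μ := by
    rw [← integral_add_compl hΩ (hSint _ hd).norm]
    have h0 : (∫ x in Ωᶜ, ‖(s - f) x‖ ∂μ) = 0 := by
      apply integral_eq_zero_of_ae
      rw [Filter.EventuallyEq, ae_restrict_iff' hΩ.compl]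
      filter_upwards [hsf] with x hx hxΩ
      simp [hx hxΩ]
    rw [h0, add_zero]
  have hnn : 0 ≤ ∫ x, ‖(s - f) x‖ ∂μ := integral_nonneg fun x => norm_nonneg _
  linarith
end

section
/- (Bombieri's large sieve inequality) Let μ be a nonnegative 1-periodic Borel measure on ℝ, let 0 < δ ≤ 1, and let f(α) = Σ_{k=m+1}^{m+n} a_k e^{2πikα} be a trigonometric polynomial with complex coefficients a_k. Then ∫_{[0,1)} |f(α)|² dμ(α) ≤ (n + 2/δ) · (sup_{α∈ℝ} μ([α, α+δ])) · ∫_0^1 |f(α)|² dα. -/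
open MeasureTheory

/-- partial sums of 1/j^2 -/
lemma bls_sum_inv_sq (K : ℕ) (hK : 3 ≤ K) :
    ∑ j ∈ Finset.Ico 1 K, (1 : ℝ) / (j : ℝ) ^ 2 ≤ 1.65 - 1 / ((K : ℝ) - 0.5) := by
  induction K, hK using Nat.le_induction with
  | base => norm_num [Finset.sum_Ico_succ_top]
  | succ K hK ih =>
    rw [Finset.sum_Ico_succ_top (by omega)]
    have hK' : (3 : ℝ) ≤ K := by exact_mod_cast hK
    have : (1 : ℝ) / (K : ℝ) ^ 2 ≤ 1 / ((K : ℝ) - 0.5) - 1 / (((K + 1 : ℕ) : ℝ) - 0.5) := by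
      push_cast
      rw [div_sub_div _ _ (by linarith) (by linarith), div_le_div_iff₀ (by positivity) (by nlinarith)]
      nlinarith
    linarith

lemma bls_csc_le (x : ℝ) (h0 : 0 < x) (h1 : x < Real.pi / 2) :
    1 / (Real.sin x) ^ 2 ≤ 1 / x ^ 2 + 1 := by
  have hs : 0 < Real.sin x := Real.sin_pos_of_pos_of_lt_pi h0 (by linarith)
  have hc : 0 < Real.cos x := Real.cos_pos_of_mem_Ioo ⟨by linarith, h1⟩
  have ht := Real.lt_tan h0 h1
  rw [Real.tan_eq_sin_div_cos, lt_div_iff₀ hc] at ht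
  have hsq : (x * Real.cos x) ^ 2 ≤ Real.sin x ^ 2 := by
    apply pow_le_pow_left₀ (by positivity) ht.le
  have := Real.sin_sq_add_cos_sq x
  rw [div_add_one (by positivity), div_le_div_iff₀ (by positivity) (by positivity)]
  nlinarith

lemma bls_csc_sum (K : ℕ) (hK : 1 ≤ K) :
    ∑ j ∈ Finset.Ico 1 K, 1 / (Real.sin (Real.pi * j / (2 * K))) ^ 2 ≤ (K : ℝ) * (K - 1) := by
  rcases (by omega : K = 1 ∨ K = 2 ∨ K = 3 ∨ 4 ≤ K) with rfl | rfl | rfl | h4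
  · simp
  · norm_num
    rw [div_pow]
    norm_num
  · norm_num [Finset.sum_Ico_succ_top]
    rw [show Real.pi * 2 / 6 = Real.pi / 3 by ring, Real.sin_pi_div_three, div_pow]
    norm_num
  · have hK4 : (4 : ℝ) ≤ K := by exact_mod_cast h4
    have hpi := Real.pi_gt_d2
    have hpi2 : (4 : ℝ) / Real.pi ^ 2 ≤ 0.4058 := by
      rw [div_le_iff₀ (by positivity)]; nlinarith
    have step : ∀ j ∈ Finset.Ico 1 K, 1 / (Real.sin (Real.pi * j / (2 * K))) ^ 2 ≤
        (4 / Real.pi ^ 2 * K ^ 2) * (1 / (j : ℝ) ^ 2) + 1 := by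
      intro j hj
      rw [Finset.mem_Ico] at hj
      have hj1 : (1 : ℝ) ≤ j := by exact_mod_cast hj.1
      have hjK : (j : ℝ) < K := by exact_mod_cast hj.2
      refine (bls_csc_le _ (by positivity) ?_).trans (le_of_eq ?_)
      · rw [div_lt_div_iff₀ (by positivity) (by positivity)]
        nlinarith [Real.pi_pos]
      · field_simp
        ring
    refine (Finset.sum_le_sum step).trans ?_
    rw [Finset.sum_add_distrib, ← Finset.mul_sum]
    have h2 := bls_sum_inv_sq K (by omega)
    simp only [Finset.sum_const, Nat.card_Ico, nsmul_eq_mul, mul_one]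
    rw [Nat.cast_sub (by omega)]
    push_cast
    set s := ∑ j ∈ Finset.Ico 1 K, (1 : ℝ) / (j : ℝ) ^ 2
    have hs : 0 ≤ s := Finset.sum_nonneg (fun _ _ => by positivity)
    have h3 : (K : ℝ) ^ 2 * s ≤ 1.65 * K ^ 2 - (K + 0.5) := by
      have : (K : ℝ) + 0.5 ≤ K ^ 2 * (1 / ((K : ℝ) - 0.5)) := by
        rw [mul_one_div, le_div_iff₀ (by linarith)]; nlinarith
      nlinarith [mul_le_mul_of_nonneg_left h2 (sq_nonneg (K : ℝ))]
    have h5 : 4 / Real.pi ^ 2 * K ^ 2 * s ≤ 0.4058 * (1.65 * K ^ 2 - (K + 0.5)) := by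
      rw [mul_assoc]
      exact mul_le_mul hpi2 h3 (by positivity) (by norm_num)
    nlinarith

noncomputable def blsE (k : ℤ) (x : ℝ) : ℂ := Complex.exp (2 * Real.pi * Complex.I * k * x)

lemma blsE_norm (k : ℤ) (x : ℝ) : ‖blsE k x‖ = 1 := by
  unfold blsE
  rw [show (2 * Real.pi * Complex.I * k * x : ℂ) = ((2 * Real.pi * k * x : ℝ) : ℂ) * Complex.I by
    push_cast; ring]
  exact Complex.norm_exp_ofReal_mul_I _

lemma blsE_add (k l : ℤ) (x : ℝ) : blsE (k + l) x = blsE k x * blsE l x := by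
  unfold blsE
  rw [← Complex.exp_add]; congr 1; push_cast; ring

lemma blsE_sub_arg (k : ℤ) (x y : ℝ) : blsE k (y - x) = blsE k y * blsE (-k) x := by
  unfold blsE
  rw [← Complex.exp_add]; congr 1; push_cast; ring

lemma blsE_conj (k : ℤ) (x : ℝ) : (starRingEnd ℂ) (blsE k x) = blsE (-k) x := by
  unfold blsE
  rw [← Complex.exp_conj]; congr 1; simp [Complex.conj_ofReal, Complex.conj_ofNat]

lemma blsE_cont (k : ℤ) : Continuous (blsE k) := by
  unfold blsE; fun_prop

lemma blsE_zero (x : ℝ) : blsE 0 x = 1 := by simp [blsE]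

lemma blsE_periodic (k : ℤ) (x : ℝ) : blsE k (x + 1) = blsE k x := by
  unfold blsE
  rw [Complex.exp_eq_exp_iff_exists_int]
  exact ⟨k, by push_cast; ring⟩

lemma blsE_pow (q : ℕ) (x : ℝ) : blsE q x = (blsE 1 x) ^ q := by
  unfold blsE
  rw [← Complex.exp_nat_mul]; congr 1; push_cast; ring

/-- geometric sum -/
noncomputable def blsG (N : ℕ) (t : ℝ) : ℂ := ∑ q ∈ Finset.range N, blsE q t

lemma blsG_cont (N : ℕ) : Continuous (blsG N) := by
  unfold blsG
  exact continuous_finsetSum _ (fun q _ => blsE_cont q)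

lemma blsG_norm_le (N : ℕ) (t : ℝ) : ‖blsG N t‖ ≤ N := by
  unfold blsG
  refine (norm_sum_le _ _).trans ?_
  simp [blsE_norm]

lemma blsG_norm_mul_sin (N : ℕ) (t : ℝ) : ‖blsG N t‖ * |Real.sin (Real.pi * t)| ≤ 1 := by
  have h1 : blsG N t * (blsE 1 t - 1) = blsE N t - 1 := by
    unfold blsG
    simp_rw [blsE_pow]
    exact geom_sum_mul _ _
  have h2 : ‖blsE 1 t - 1‖ = 2 * |Real.sin (Real.pi * t)| := by
    unfold blsE
    have := Complex.norm_exp_I_mul_ofReal_sub_one (2 * Real.pi * t)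
    rw [show (2 * Real.pi * Complex.I * (1 : ℤ) * t : ℂ) =
      Complex.I * ((2 * Real.pi * t : ℝ) : ℂ) by push_cast; ring, this]
    rw [norm_mul, Real.norm_eq_abs, Real.norm_eq_abs]
    norm_num
    congr 2; ring
  have h3 : ‖blsE N t - 1‖ ≤ 2 := by
    refine (norm_sub_le _ _).trans ?_
    rw [blsE_norm]; norm_num
  rw [← h1, norm_mul, h2] at h3
  linarith

lemma blsG_periodic (N : ℕ) (t : ℝ) : blsG N (t + 1) = blsG N t := by
  unfold blsG
  simp_rw [blsE_periodic]

/-- interval masses -/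
lemma bls_mass (μ : Measure ℝ) (M : ENNReal) (r : ℝ)
    (hM : ∀ x, μ (Set.Icc x (x + r)) ≤ M) (i : ℕ) (x : ℝ) :
    μ (Set.Icc x (x + (i + 1) * r)) ≤ (i + 1) * M := by
  induction i with
  | zero => simpa using hM x
  | succ i ih =>
    have : Set.Icc x (x + ((i + 1 : ℕ) + 1) * r) ⊆ Set.Icc x (x + (i + 1) * r) ∪
        Set.Icc (x + (i + 1) * r) ((x + (i + 1) * r) + r) := by
      intro y hy
      simp only [Set.mem_union, Set.mem_Icc] at hy ⊢
      push_cast at hy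
      rcases le_total y (x + (i + 1) * r) with h | h
      · exact Or.inl ⟨hy.1, h⟩
      · exact Or.inr ⟨h, by linarith [hy.2]⟩
    refine (measure_mono this).trans ((measure_union_le _ _).trans ?_)
    refine (add_le_add ih (hM _)).trans (le_of_eq ?_)
    push_cast; ring

lemma bls_abel (E : ℕ → ℝ) (K : ℕ) :
    ∑ j ∈ Finset.range K, ((j : ℝ) + 1) * (E j - E (j + 1)) = ∑ j ∈ Finset.range K, E j - K * E K := by
  induction K with
  | zero => simp
  | succ K ih => rw [Finset.sum_range_succ, Finset.sum_range_succ, ih]; push_cast; ring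

/-- layer cake -/
lemma bls_layer (μ : Measure ℝ) (M : ENNReal) (K : ℕ) (hK : 1 ≤ K)
    (hM : ∀ x, μ (Set.Icc x (x + 1 / K)) ≤ M) (E : ℕ → ℝ)
    (hE : ∀ j < K, E (j + 1) ≤ E j) (hEK : E K = 0) (α : ℝ) (H : ℝ → ℝ)
    (hH : ∀ t : ℝ, |t| ≤ 1 / 2 → ∀ j < K, (j : ℝ) / (2 * K) ≤ |t| → H t ≤ E j) :
    ∫⁻ β in Set.Ico (α - 1 / 2) (α - 1 / 2 + 1), ENNReal.ofReal (H (β - α)) ∂μ ≤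
      ENNReal.ofReal (∑ j ∈ Finset.range K, E j) * M := by
  have hK0 : (0 : ℝ) < K := by exact_mod_cast hK
  have key : ∀ β ∈ Set.Ico (α - 1 / 2) (α - 1 / 2 + 1), ENNReal.ofReal (H (β - α)) ≤
      ∑ j ∈ Finset.range K, (Set.Icc (α - (j + 1) / (2 * K)) (α - (j + 1) / (2 * K) + (j + 1) * (1 / K))).indicator
        (fun _ => ENNReal.ofReal (E j - E (j + 1))) β := by
    intro β hβ
    have ht : |β - α| ≤ 1 / 2 := by
      rw [abs_le]; constructor <;> linarith [hβ.1, hβ.2]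
    obtain ⟨i, hiK, hi1, hi2⟩ : ∃ i < K, (i : ℝ) / (2 * K) ≤ |β - α| ∧ |β - α| ≤ (i + 1) / (2 * K) := by
      have hx : 0 ≤ |β - α| * (2 * K) := by positivity
      by_cases hlt : ⌊|β - α| * (2 * K)⌋₊ < K
      · refine ⟨_, hlt, ?_, ?_⟩
        · rw [div_le_iff₀ (by positivity)]; exact Nat.floor_le hx
        · rw [le_div_iff₀ (by positivity)]; exact (Nat.lt_floor_add_one _).le
      · push Not at hlt
        have h1 : (K : ℝ) ≤ |β - α| * (2 * K) := (Nat.le_floor_iff hx).1 hlt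
        refine ⟨K - 1, by omega, ?_, ?_⟩
        · rw [div_le_iff₀ (by positivity), Nat.cast_sub hK]; push_cast; linarith
        · rw [Nat.cast_sub hK, le_div_iff₀ (by positivity)]; push_cast; nlinarith
    have hsum : ∑ j ∈ Finset.Ico i K, (E j - E (j + 1)) = E i := by
      have := Finset.sum_Ico_sub E hiK.le
      rw [hEK] at this
      have h2 : ∑ j ∈ Finset.Ico i K, (E j - E (j + 1)) = - ∑ j ∈ Finset.Ico i K, (E (j + 1) - E j) := by
        rw [← Finset.sum_neg_distrib]; exact Finset.sum_congr rfl (fun _ _ => by ring)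
      rw [h2, this]; ring
    calc ENNReal.ofReal (H (β - α)) ≤ ENNReal.ofReal (E i) :=
          ENNReal.ofReal_le_ofReal (hH _ ht i hiK hi1)
      _ = ∑ j ∈ Finset.Ico i K, ENNReal.ofReal (E j - E (j + 1)) := by
          rw [← hsum, ENNReal.ofReal_sum_of_nonneg]
          intro j hj
          have := hE j (Finset.mem_Ico.1 hj).2
          linarith
      _ = ∑ j ∈ Finset.Ico i K, (Set.Icc (α - (j + 1) / (2 * K)) (α - (j + 1) / (2 * K) + (j + 1) * (1 / K))).indicator
        (fun _ => ENNReal.ofReal (E j - E (j + 1))) β := by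
          apply Finset.sum_congr rfl
          intro j hj
          rw [Set.indicator_of_mem]
          have hij : (i : ℝ) ≤ j := by exact_mod_cast (Finset.mem_Ico.1 hj).1
          have h3 : |β - α| ≤ ((j : ℝ) + 1) / (2 * K) := hi2.trans (by gcongr)
          rw [abs_le] at h3
          have h4 : ((j : ℝ) + 1) * (1 / K) = 2 * (((j : ℝ) + 1) / (2 * K)) := by field_simp
          rw [h4]
          constructor <;> linarith [h3.1, h3.2]
      _ ≤ _ := by
          apply Finset.sum_le_sum_of_subset
          intro j hj
          simp only [Finset.mem_Ico, Finset.mem_range] at hj ⊢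
          exact hj.2
  refine (setLIntegral_mono' measurableSet_Ico key).trans ?_
  refine (setLIntegral_le_lintegral _ _).trans ?_
  rw [lintegral_finsetSum _ (fun j _ => measurable_const.indicator measurableSet_Icc)]
  have h5 := bls_abel E K
  rw [hEK, mul_zero, sub_zero] at h5
  rw [← h5, ENNReal.ofReal_sum_of_nonneg, Finset.sum_mul]
  · apply Finset.sum_le_sum
    intro j hj
    rw [lintegral_indicator_const measurableSet_Icc, ENNReal.ofReal_mul (by positivity), mul_comm (ENNReal.ofReal _), mul_assoc,
      mul_comm (ENNReal.ofReal _) M, ← mul_assoc, ]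
    gcongr
    refine (bls_mass μ M (1 / K) hM j _).trans (le_of_eq ?_)
    congr 1
    rw [ENNReal.ofReal_add (by positivity) (by norm_num)]; simp
  · intro j hj
    have := hE j (Finset.mem_range.1 hj)
    have : 0 ≤ E j - E (j + 1) := by linarith
    positivity

lemma bls_fund (c : ℝ) (μ : Measure ℝ) :
    IsAddFundamentalDomain (AddSubgroup.zmultiples (1 : ℝ)) (Set.Ico c (c + 1)) μ := by
  refine IsAddFundamentalDomain.mk' nullMeasurableSet_Ico fun x => ?_
  have : Function.Bijective (Set.codRestrict (fun n : ℤ => n • (1 : ℝ)) (AddSubgroup.zmultiples (1 : ℝ)) (fun n => ⟨n, rfl⟩)) :=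
    (Equiv.ofInjective (fun n : ℤ => n • (1 : ℝ)) (zsmul_left_strictMono one_pos).injective).bijective
  refine this.existsUnique_iff.2 ?_
  simpa only [add_comm x] using! existsUnique_add_zsmul_mem_Ico one_pos x c

lemma bls_inv (μ : Measure ℝ) (hper : Measure.map (fun x : ℝ => x + 1) μ = μ) (n : ℤ) :
    Measure.map (fun x : ℝ => x + n) μ = μ := by
  have hneg : Measure.map (fun x : ℝ => x + (-1)) μ = μ := by
    conv_lhs => rw [← hper]
    rw [Measure.map_map (by fun_prop) (by fun_prop)]
    have : ((fun x : ℝ => x + (-1)) ∘ fun x : ℝ => x + 1) = id := by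
      funext x; simp
    rw [this, Measure.map_id]
  induction n using Int.induction_on with
  | zero => simp
  | succ i ih =>
    have : (fun x : ℝ => x + ((i + 1 : ℤ) : ℝ)) = (fun x : ℝ => x + 1) ∘ (fun x : ℝ => x + (i : ℤ)) := by
      funext x; simp; ring
    rw [this, ← Measure.map_map (by fun_prop) (by fun_prop), ih, hper]
  | pred i ih =>
    have : (fun x : ℝ => x + ((-i - 1 : ℤ) : ℝ)) =
        (fun x : ℝ => x + (-1)) ∘ (fun x : ℝ => x + (-i : ℤ)) := by
      funext x; simp; ring
    rw [this, ← Measure.map_map (by fun_prop) (by fun_prop), ih, hneg]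

lemma bls_shift (μ : Measure ℝ) (hper : Measure.map (fun x : ℝ => x + 1) μ = μ)
    (g : ℝ → ENNReal) (hg : Function.Periodic g 1) (c : ℝ) :
    ∫⁻ x in Set.Ico 0 1, g x ∂μ = ∫⁻ x in Set.Ico c (c + 1), g x ∂μ := by
  have : VAddInvariantMeasure (AddSubgroup.zmultiples (1 : ℝ)) ℝ μ := by
    constructor
    rintro ⟨_, n, rfl⟩ s hs
    conv_rhs => rw [← bls_inv μ hper n]
    rw [Measure.map_apply (by fun_prop) hs]
    congr 1
    ext x
    simp [AddSubgroup.vadd_def, add_comm]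
  have h := (bls_fund 0 μ).setLIntegral_eq (bls_fund c μ) g hg.map_vadd_zmultiples
  simpa using h

lemma bls_kernel (μ : Measure ℝ) (hper : Measure.map (fun x : ℝ => x + 1) μ = μ)
    (M : ENNReal) (K n : ℕ) (hK : 1 ≤ K) (hn : 1 ≤ n)
    (hM : ∀ x, μ (Set.Icc x (x + 1 / K)) ≤ M) (α : ℝ) :
    ∫⁻ β in Set.Ico 0 1, ENNReal.ofReal (‖blsG K (β - α)‖ * ‖blsG (n + K - 1) (β - α)‖) ∂μ ≤
      ENNReal.ofReal (K * (n + 2 * (K - 1))) * M := by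
  have hK0 : (1 : ℝ) ≤ K := by exact_mod_cast hK
  have hn0 : (1 : ℝ) ≤ n := by exact_mod_cast hn
  have hp := Real.pi_pos
  rw [bls_shift μ hper _ _ (α - 1 / 2)]
  swap
  · intro β
    simp only
    rw [show β + 1 - α = (β - α) + 1 by ring, blsG_periodic, blsG_periodic]
  set E : ℕ → ℝ := fun j => if j = 0 then K * (n + K - 1) else
    if j < K then 1 / (Real.sin (Real.pi * j / (2 * K))) ^ 2 else 0 with hEdef
  have hang : ∀ j : ℕ, 1 ≤ j → j ≤ K → 0 < Real.pi * j / (2 * K) ∧ Real.pi * j / (2 * K) ≤ Real.pi / 2 := by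
    intro j h1 h2
    have h1' : (1 : ℝ) ≤ j := by exact_mod_cast h1
    have h2' : (j : ℝ) ≤ K := by exact_mod_cast h2
    refine ⟨by positivity, ?_⟩
    rw [div_le_div_iff₀ (by positivity) (by positivity)]
    nlinarith
  have hbound := bls_layer μ M K hK hM E ?_ ?_ α
    (fun t => ‖blsG K t‖ * ‖blsG (n + K - 1) t‖) ?_
  · refine hbound.trans ?_
    gcongr
    have h1 : ∑ j ∈ Finset.range K, E j = E 0 + ∑ j ∈ Finset.Ico 1 K, E j := by
      rw [Finset.range_eq_Ico, Finset.sum_eq_sum_Ico_succ_bot (by omega)]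
    have h2 : ∑ j ∈ Finset.Ico 1 K, E j =
        ∑ j ∈ Finset.Ico 1 K, 1 / (Real.sin (Real.pi * j / (2 * K))) ^ 2 := by
      apply Finset.sum_congr rfl
      intro j hj
      rw [Finset.mem_Ico] at hj
      simp only [hEdef]
      rw [if_neg (by omega), if_pos hj.2]
    have h3 := bls_csc_sum K hK
    rw [h1, h2]
    have : E 0 = K * (n + K - 1) := by simp [hEdef]
    rw [this]
    nlinarith
  · intro j hj
    simp only [hEdef]
    rw [if_neg (by omega)]
    by_cases hj1 : j + 1 < K
    · rw [if_pos hj1]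
      by_cases hj0 : j = 0
      · subst hj0
        rw [if_pos rfl]
        have hs := Real.mul_le_sin (hang 1 le_rfl hK).1.le (hang 1 le_rfl hK).2
        have h1 : 2 / Real.pi * (Real.pi * ((1 : ℕ) : ℝ) / (2 * K)) = 1 / K := by
          push_cast; field_simp
        rw [h1] at hs
        have h2 : (1 / (K : ℝ)) ^ 2 ≤ (Real.sin (Real.pi * ((1 : ℕ) : ℝ) / (2 * K))) ^ 2 :=
          pow_le_pow_left₀ (by positivity) hs 2
        have h3 := one_div_le_one_div_of_le (by positivity) h2
        rw [zero_add]
        refine h3.trans ?_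
        rw [one_div_pow, one_div_one_div]
        nlinarith
      · rw [if_neg hj0, if_pos hj]
        have a1 := hang j (by omega) hj.le
        have a2 := hang (j + 1) (by omega) hj
        have hs0 : 0 < Real.sin (Real.pi * j / (2 * K)) :=
          Real.sin_pos_of_pos_of_lt_pi a1.1 (by linarith)
        apply one_div_le_one_div_of_le (by positivity)
        apply pow_le_pow_left₀ hs0.le
        apply Real.sin_le_sin_of_le_of_le_pi_div_two (by linarith) a2.2
        gcongr
        push_cast; linarith
    · rw [if_neg hj1]
      split_ifs
      · have : (0 : ℝ) ≤ n + K - 1 := by linarith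
        positivity
      · positivity
  · simp only [hEdef]
    rw [if_neg (by omega), if_neg (by omega)]
  · intro t ht j hj hjt
    simp only [hEdef]
    by_cases hj0 : j = 0
    · rw [if_pos hj0]
      have h2 := blsG_norm_le (n + K - 1) t
      rw [Nat.cast_sub (by omega)] at h2
      push_cast at h2
      exact mul_le_mul (blsG_norm_le K t) h2 (norm_nonneg _) (by positivity)
    · rw [if_neg hj0, if_pos hj]
      have a1 := hang j (by omega) hj.le
      have hs0 : 0 < Real.sin (Real.pi * j / (2 * K)) :=
          Real.sin_pos_of_pos_of_lt_pi a1.1 (by linarith)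
      have hle : Real.sin (Real.pi * j / (2 * K)) ≤ |Real.sin (Real.pi * t)| := by
        have h1 : |Real.sin (Real.pi * t)| = Real.sin (Real.pi * |t|) := by
          rcases abs_cases t with ⟨h, h'⟩ | ⟨h, h'⟩
          · rw [h, abs_of_nonneg]
            apply Real.sin_nonneg_of_nonneg_of_le_pi (by positivity)
            rw [h] at ht; nlinarith
          · have : 0 ≤ Real.sin (Real.pi * -t) := by
              apply Real.sin_nonneg_of_nonneg_of_le_pi
              · nlinarith
              · rw [h] at ht; nlinarith
            rw [h, ← abs_of_nonneg this, mul_neg, Real.sin_neg, abs_neg]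
        rw [h1]
        apply Real.sin_le_sin_of_le_of_le_pi_div_two (by linarith)
        · nlinarith
        · rw [mul_div_assoc]; gcongr
      have g1 := blsG_norm_mul_sin K t
      have g2 := blsG_norm_mul_sin (n + K - 1) t
      set s := |Real.sin (Real.pi * t)|
      have hs : 0 < s := hs0.trans_le hle
      refine le_trans (b := 1 / s ^ 2) ?_ ?_
      · rw [le_div_iff₀ (by positivity)]
        calc _ = (‖blsG K t‖ * s) * (‖blsG (n + K - 1) t‖ * s) := by ring
          _ ≤ 1 * 1 := mul_le_mul g1 g2 (by positivity) (by norm_num)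
          _ = 1 := by norm_num
      · apply one_div_le_one_div_of_le (by positivity)
        exact pow_le_pow_left₀ hs0.le hle 2

lemma blsG_conj (K : ℕ) (t : ℝ) :
    (starRingEnd ℂ) (blsG K t) = ∑ p ∈ Finset.range K, blsE (-(p : ℤ)) t := by
  unfold blsG
  rw [map_sum]
  simp_rw [blsE_conj]

lemma blsG_neg (K : ℕ) (t : ℝ) : ‖blsG K (-t)‖ = ‖blsG K t‖ := by
  have : blsG K (-t) = (starRingEnd ℂ) (blsG K t) := by
    rw [blsG_conj]
    unfold blsG
    apply Finset.sum_congr rfl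
    intro p _
    unfold blsE
    congr 1; push_cast; ring
  rw [this, RCLike.norm_conj]

noncomputable def blsC (ν : Measure ℝ) (f : ℝ → ℂ) (k : ℤ) : ℂ := ∫ x, f x * blsE (-k) x ∂ν

lemma bls_int_bdd {X : Type*} [TopologicalSpace X] [MeasurableSpace X] [OpensMeasurableSpace X]
    [SecondCountableTopology X] (ν : Measure X) [IsFiniteMeasure ν] (g : X → ℂ) (hg : Continuous g) (C : ℝ)
    (hC : ∀ x, ‖g x‖ ≤ C) : Integrable g ν :=
  Integrable.of_bound hg.aestronglyMeasurable C (Filter.Eventually.of_forall hC)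

lemma bls_dual (ν : Measure ℝ) [IsFiniteMeasure ν] (f : ℝ → ℂ) (hf : Continuous f) (C : ℝ)
    (hC : ∀ x, ‖f x‖ ≤ C) (K N : ℕ) (k0 : ℤ) (B : ENNReal)
    (hB : ∀ α, ∫⁻ β, ENNReal.ofReal (‖blsG K (β - α)‖ * ‖blsG N (β - α)‖) ∂ν ≤ B) :
    ENNReal.ofReal (∑ p ∈ Finset.range K, ∑ q ∈ Finset.range N, ‖blsC ν f (k0 + q - p)‖ ^ 2) ≤
      B * ∫⁻ x, ‖f x‖ₑ ^ 2 ∂ν := by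
  have hC0 : 0 ≤ C := (norm_nonneg _).trans (hC 0)
  have hterm : ∀ k : ℤ, ((‖blsC ν f k‖ ^ 2 : ℝ) : ℂ) =
      ∫ z : ℝ × ℝ, f z.1 * (starRingEnd ℂ) (f z.2) * blsE k (z.2 - z.1) ∂(ν.prod ν) := by
    intro k
    have h1 : ((‖blsC ν f k‖ ^ 2 : ℝ) : ℂ) = blsC ν f k * (starRingEnd ℂ) (blsC ν f k) := by
      rw [Complex.mul_conj, Complex.normSq_eq_norm_sq]
    rw [h1]
    unfold blsC
    rw [← integral_conj, ← integral_prod_mul]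
    congr 1
    funext z
    rw [blsE_sub_arg, map_mul, blsE_conj, neg_neg]
    ring
  have hint : ∀ k : ℤ, Integrable (fun z : ℝ × ℝ => f z.1 * (starRingEnd ℂ) (f z.2) * blsE k (z.2 - z.1))
      (ν.prod ν) := by
    intro k
    have := blsE_cont k
    apply bls_int_bdd _ _ (by fun_prop) (C * C)
    intro z
    rw [norm_mul, norm_mul, blsE_norm, mul_one, RCLike.norm_conj]
    exact mul_le_mul (hC _) (hC _) (norm_nonneg _) hC0
  have hsum : ((∑ p ∈ Finset.range K, ∑ q ∈ Finset.range N, ‖blsC ν f (k0 + q - p)‖ ^ 2 : ℝ) : ℂ) =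
      ∫ z : ℝ × ℝ, f z.1 * (starRingEnd ℂ) (f z.2) *
        (blsE k0 (z.2 - z.1) * blsG N (z.2 - z.1) * (starRingEnd ℂ) (blsG K (z.2 - z.1))) ∂(ν.prod ν) := by
    push_cast
    have h1 : ∀ p ∈ Finset.range K, ∑ q ∈ Finset.range N, ((‖blsC ν f (k0 + q - p)‖ : ℂ)) ^ 2 =
        ∫ z : ℝ × ℝ, ∑ q ∈ Finset.range N, f z.1 * (starRingEnd ℂ) (f z.2) *
          blsE (k0 + q - p) (z.2 - z.1) ∂(ν.prod ν) := by
      intro p _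
      rw [integral_finsetSum _ (fun q _ => hint _)]
      apply Finset.sum_congr rfl
      intro q _
      rw [← hterm]; push_cast; rfl
    rw [Finset.sum_congr rfl h1, ← integral_finsetSum _ (fun p _ => integrable_finsetSum _ (fun q _ => hint _))]
    congr 1
    funext z
    rw [blsG_conj, blsG, Finset.mul_sum, Finset.mul_sum]
    apply Finset.sum_congr rfl
    intro p _
    rw [Finset.mul_sum, Finset.sum_mul, Finset.mul_sum]
    apply Finset.sum_congr rfl
    intro q _
    rw [sub_eq_add_neg, blsE_add, blsE_add]
  set H : ℝ → ENNReal := fun t => ENNReal.ofReal (‖blsG K t‖ * ‖blsG N t‖) with hH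
  have hHm : Continuous H := by
    have := blsG_cont K
    have := blsG_cont N
    exact ENNReal.continuous_ofReal.comp (by fun_prop)
  have hHneg : ∀ t, H (-t) = H t := by
    intro t; simp only [hH, blsG_neg]
  have hle : ENNReal.ofReal (∑ p ∈ Finset.range K, ∑ q ∈ Finset.range N, ‖blsC ν f (k0 + q - p)‖ ^ 2) ≤
      ∫⁻ z : ℝ × ℝ, ‖f z.1‖ₑ * ‖f z.2‖ₑ * H (z.2 - z.1) ∂(ν.prod ν) := by
    set T := ∑ p ∈ Finset.range K, ∑ q ∈ Finset.range N, ‖blsC ν f (k0 + q - p)‖ ^ 2 with hT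
    have hT0 : 0 ≤ T := Finset.sum_nonneg fun _ _ => Finset.sum_nonneg fun _ _ => by positivity
    have : ENNReal.ofReal T = ‖(T : ℂ)‖ₑ := by
      rw [← ofReal_norm, Complex.norm_real, Real.norm_of_nonneg hT0]
    rw [this, hsum]
    refine (enorm_integral_le_lintegral_enorm _).trans (le_of_eq ?_)
    congr 1
    funext z
    simp only [hH]
    rw [← ofReal_norm, ← ofReal_norm, ← ofReal_norm, ← ENNReal.ofReal_mul (by positivity),
      ← ENNReal.ofReal_mul (by positivity)]
    congr 1
    simp only [norm_mul, RCLike.norm_conj, blsE_norm]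
    ring
  have hfe : Measurable fun x => ‖f x‖ₑ := hf.measurable.enorm
  have hI1 : ∫⁻ z : ℝ × ℝ, ‖f z.1‖ₑ ^ 2 * H (z.2 - z.1) ∂(ν.prod ν) ≤ B * ∫⁻ x, ‖f x‖ₑ ^ 2 ∂ν := by
    have hm := hHm.measurable
    rw [lintegral_prod _ (by fun_prop), mul_comm, ← lintegral_mul_const _ (by fun_prop)]
    apply lintegral_mono
    intro x
    simp only
    rw [lintegral_const_mul _ (by fun_prop)]
    gcongr
    exact hB x
  have hI2 : ∫⁻ z : ℝ × ℝ, ‖f z.2‖ₑ ^ 2 * H (z.2 - z.1) ∂(ν.prod ν) ≤ B * ∫⁻ x, ‖f x‖ₑ ^ 2 ∂ν := by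
    refine le_trans (le_of_eq ?_) hI1
    rw [← lintegral_prod_swap]
    congr 1
    funext z
    simp only [Prod.fst_swap, Prod.snd_swap]
    rw [← hHneg, neg_sub]
  have h2 : 2 * ∫⁻ z : ℝ × ℝ, ‖f z.1‖ₑ * ‖f z.2‖ₑ * H (z.2 - z.1) ∂(ν.prod ν) ≤
      2 * (B * ∫⁻ x, ‖f x‖ₑ ^ 2 ∂ν) := by
    have hm := hHm.measurable
    rw [← lintegral_const_mul _ (by fun_prop), two_mul (B * _)]
    refine le_trans ?_ (add_le_add hI1 hI2)
    rw [← lintegral_add_left (by fun_prop)]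
    apply lintegral_mono
    intro z
    simp only
    rw [← add_mul, ← mul_assoc, ← mul_assoc]
    gcongr
    have h := two_mul_le_add_sq ‖f z.1‖₊ ‖f z.2‖₊
    simp only [enorm_eq_nnnorm]
    exact_mod_cast h
  exact hle.trans ((ENNReal.mul_le_mul_iff_right (by norm_num) (by norm_num)).1 h2)

lemma bls_ident (ν : Measure ℝ) [IsFiniteMeasure ν] (s : Finset ℤ) (a : ℤ → ℂ) (f : ℝ → ℂ)
    (hfc : Continuous f) (C : ℝ) (hC : ∀ x, ‖f x‖ ≤ C)
    (hf : ∀ x, f x = ∑ k ∈ s, a k * blsE k x) :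
    (((∫⁻ x, ‖f x‖ₑ ^ 2 ∂ν).toReal : ℝ) : ℂ) = ∑ k ∈ s, a k * (starRingEnd ℂ) (blsC ν f k) := by
  have h1 : (∫⁻ x, ‖f x‖ₑ ^ 2 ∂ν).toReal = ∫ x, ‖f x‖ ^ 2 ∂ν := by
    rw [integral_eq_lintegral_of_nonneg_ae (Filter.Eventually.of_forall fun x => by positivity)
      (by fun_prop)]
    congr 2
    funext x
    rw [ENNReal.ofReal_pow (norm_nonneg _), ofReal_norm]
  rw [h1, ← integral_complex_ofReal]
  have h2 : ∀ x, ((‖f x‖ ^ 2 : ℝ) : ℂ) = ∑ k ∈ s, a k * (starRingEnd ℂ) (f x * blsE (-k) x) := by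
    intro x
    have h3 : ((‖f x‖ ^ 2 : ℝ) : ℂ) = f x * (starRingEnd ℂ) (f x) := by
      rw [Complex.mul_conj, Complex.normSq_eq_norm_sq]
    rw [h3]
    have h4 : f x * (starRingEnd ℂ) (f x) = (∑ k ∈ s, a k * blsE k x) * (starRingEnd ℂ) (f x) := by
      rw [← hf x]
    rw [h4, Finset.sum_mul]
    apply Finset.sum_congr rfl
    intro k _
    rw [map_mul, blsE_conj, neg_neg]; ring
  simp_rw [h2]
  rw [integral_finsetSum]
  · apply Finset.sum_congr rfl
    intro k _
    rw [integral_const_mul, integral_conj]; rfl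
  · intro k _
    apply Integrable.const_mul
    have := blsE_cont (-k)
    apply bls_int_bdd _ _ (by fun_prop) C
    intro x
    rw [RCLike.norm_conj, norm_mul, blsE_norm, mul_one]
    exact hC x

lemma blsE_integral (k : ℤ) : ∫ x in Set.Ico (0 : ℝ) 1, blsE k x = if k = 0 then 1 else 0 := by
  rw [integral_Ico_eq_integral_Ioc, ← intervalIntegral.integral_of_le zero_le_one]
  split_ifs with h
  · subst h; simp [blsE_zero]
  · unfold blsE
    have hc : (2 * Real.pi * Complex.I * k : ℂ) ≠ 0 := by
      have : (k : ℂ) ≠ 0 := by exact_mod_cast h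
      have := Complex.two_pi_I_ne_zero
      positivity
    rw [integral_exp_mul_complex hc]
    have := blsE_periodic k 0
    unfold blsE at this
    rw [zero_add] at this
    rw [this, sub_self, zero_div]

lemma bls_parseval (s : Finset ℤ) (a : ℤ → ℂ) (f : ℝ → ℂ)
    (hfc : Continuous f) (C : ℝ) (hC : ∀ x, ‖f x‖ ≤ C)
    (hf : ∀ x, f x = ∑ k ∈ s, a k * blsE k x) :
    ∫⁻ x in Set.Ico (0 : ℝ) 1, ‖f x‖ₑ ^ 2 = ENNReal.ofReal (∑ k ∈ s, ‖a k‖ ^ 2) := by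
  have : IsFiniteMeasure (volume.restrict (Set.Ico (0 : ℝ) 1)) := ⟨by simp⟩
  have h := bls_ident (volume.restrict (Set.Ico (0 : ℝ) 1)) s a f hfc C hC hf
  have hc : ∀ k ∈ s, blsC (volume.restrict (Set.Ico (0 : ℝ) 1)) f k = a k := by
    intro k hk
    unfold blsC
    simp_rw [hf, Finset.sum_mul]
    rw [integral_finsetSum]
    · have : ∀ l ∈ s, ∫ x in Set.Ico (0 : ℝ) 1, a l * blsE l x * blsE (-k) x =
          if l = k then a l else 0 := by
        intro l _
        simp_rw [mul_assoc, ← blsE_add]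
        rw [integral_const_mul, blsE_integral]
        by_cases hlk : l = k
        · simp [hlk]
        · rw [if_neg (by omega), if_neg hlk, mul_zero]
      rw [Finset.sum_congr rfl this]
      simp [hk]
    · intro l _
      have h1 := blsE_cont (-k)
      have h2 := blsE_cont l
      apply bls_int_bdd _ _ (by fun_prop) ‖a l‖
      intro x
      simp [blsE_norm]
  have h2 : ∑ k ∈ s, a k * (starRingEnd ℂ) (blsC (volume.restrict (Set.Ico (0 : ℝ) 1)) f k) =
      ((∑ k ∈ s, ‖a k‖ ^ 2 : ℝ) : ℂ) := by
    push_cast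
    apply Finset.sum_congr rfl
    intro k hk
    rw [hc k hk, Complex.mul_conj, Complex.normSq_eq_norm_sq]; push_cast; rfl
  rw [h2] at h
  have h3 := Complex.ofReal_injective h
  rw [← h3, ENNReal.ofReal_toReal]
  refine ne_top_of_le_ne_top ?_ (lintegral_mono (g := fun _ => ENNReal.ofReal (C ^ 2)) ?_)
  · simp
  · intro x
    simp only
    rw [← ofReal_norm, ← ENNReal.ofReal_pow (norm_nonneg _)]
    exact ENNReal.ofReal_le_ofReal (pow_le_pow_left₀ (norm_nonneg _) (hC x) 2)

/-- **Bombieri's large sieve inequality.** Let `μ` be a nonnegative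
1-periodic Borel measure on `ℝ`, `0 < δ ≤ 1`, and let
`f(α) = ∑_{k=m+1}^{m+n} a_k e^{2πikα}` be a trigonometric polynomial.  Then
`∫_{[0,1)} |f|² dμ ≤ (n + 2/δ) · (sup_α μ([α, α+δ])) · ∫_0^1 |f|² dα`,
the last integral being with respect to Lebesgue measure. -/
theorem bombieri_large_sieve
    (μ : Measure ℝ) (hper : Measure.map (fun x : ℝ => x + 1) μ = μ)
    (δ : ℝ) (hδ0 : 0 < δ) (hδ1 : δ ≤ 1)
    (m : ℤ) (n : ℕ) (a : ℤ → ℂ)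
    (f : ℝ → ℂ)
    (hf : ∀ α : ℝ, f α = ∑ k ∈ Finset.Icc (m + 1) (m + n),
      a k * Complex.exp (2 * Real.pi * Complex.I * k * α)) :
    (∫⁻ α in Set.Ico (0 : ℝ) 1, (‖f α‖₊ : ENNReal) ^ 2 ∂μ) ≤
      ENNReal.ofReal ((n : ℝ) + 2 / δ) * (⨆ α : ℝ, μ (Set.Icc α (α + δ))) *
        ∫⁻ α in Set.Ico (0 : ℝ) 1, (‖f α‖₊ : ENNReal) ^ 2 ∂volume := by
  change (∫⁻ α in Set.Ico (0 : ℝ) 1, ‖f α‖ₑ ^ 2 ∂μ) ≤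
      ENNReal.ofReal ((n : ℝ) + 2 / δ) * (⨆ α : ℝ, μ (Set.Icc α (α + δ))) *
        ∫⁻ α in Set.Ico (0 : ℝ) 1, ‖f α‖ₑ ^ 2 ∂volume
  set s := Finset.Icc (m + 1) (m + n) with hs
  set M := ⨆ α : ℝ, μ (Set.Icc α (α + δ)) with hMdef
  have hf' : ∀ x, f x = ∑ k ∈ s, a k * blsE k x := hf
  set C := ∑ k ∈ s, ‖a k‖ with hCdef
  have hC : ∀ x, ‖f x‖ ≤ C := by
    intro x
    rw [hf' x]
    refine (norm_sum_le _ _).trans (le_of_eq ?_)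
    simp [blsE_norm, hCdef]
  have hfc : Continuous f := by
    rw [show f = fun x => ∑ k ∈ s, a k * blsE k x from funext hf']
    exact continuous_finsetSum _ (fun k _ => continuous_const.mul (blsE_cont k))
  rw [bls_parseval s a f hfc C hC hf']
  set A := ∑ k ∈ s, ‖a k‖ ^ 2 with hA
  have hA0 : 0 ≤ A := Finset.sum_nonneg fun _ _ => by positivity
  rcases hA0.eq_or_lt with hA0' | hApos
  · have hz : ∀ k ∈ s, a k = 0 := by
      intro k hk
      have := (Finset.sum_eq_zero_iff_of_nonneg (fun k _ => by positivity)).1 hA0'.symm k hk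
      simpa using this
    have : ∀ x, f x = 0 := by
      intro x
      rw [hf' x]
      exact Finset.sum_eq_zero fun k hk => by rw [hz k hk, zero_mul]
    simp [this]
  have hn : 1 ≤ n := by
    by_contra h
    have : n = 0 := by omega
    subst this
    simp [hA, hs] at hApos
  have hcpos : 0 < (n : ℝ) + 2 / δ := by positivity
  by_cases hMtop : M = ⊤
  · rw [hMtop, ENNReal.mul_top (by simpa using hcpos), ENNReal.top_mul (by simpa using hApos)]
    exact le_top
  obtain ⟨K, hK1, hKδ, hKδ'⟩ : ∃ K : ℕ, 1 ≤ K ∧ 1 / (K : ℝ) ≤ δ ∧ (K : ℝ) - 1 ≤ 1 / δ := by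
    have h1 : 0 < 1 / δ := by positivity
    have h2 := Nat.le_ceil (1 / δ)
    have h3 := Nat.ceil_lt_add_one h1.le
    refine ⟨⌈1 / δ⌉₊, Nat.ceil_pos.2 h1, ?_, by linarith⟩
    rw [one_div_le (h1.trans_le h2) hδ0]
    exact h2
  have hK0 : (1 : ℝ) ≤ K := by exact_mod_cast hK1
  have hM : ∀ x, μ (Set.Icc x (x + 1 / K)) ≤ M := fun x =>
    (measure_mono (Set.Icc_subset_Icc_right (by linarith))).trans
      (le_iSup (fun α : ℝ => μ (Set.Icc α (α + δ))) x)
  set ν := μ.restrict (Set.Ico (0 : ℝ) 1) with hν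
  have hfin : IsFiniteMeasure ν := by
    constructor
    rw [hν, Measure.restrict_apply_univ]
    have h1 := bls_mass μ M (1 / K) hM (K - 1) 0
    have h2 : (((K - 1 : ℕ) : ℝ) + 1) * (1 / K) = 1 := by
      rw [Nat.cast_sub hK1]; push_cast; field_simp; ring
    rw [h2, zero_add] at h1
    refine (measure_mono Set.Ico_subset_Icc_self).trans_lt (h1.trans_lt ?_)
    exact ENNReal.mul_lt_top (by exact_mod_cast ENNReal.natCast_lt_top (K - 1 + 1)) (lt_top_iff_ne_top.2 hMtop)
  have hdual := bls_dual ν f hfc C hC K (n + K - 1) (m + 1) _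
    (fun α => bls_kernel μ hper M K n hK1 hn hM α)
  have hid := bls_ident ν s a f hfc C hC hf'
  set I := ∫⁻ x, ‖f x‖ₑ ^ 2 ∂ν with hI
  have hIfin : I ≠ ⊤ := by
    refine ne_top_of_le_ne_top ?_ (lintegral_mono (g := fun _ => ENNReal.ofReal (C ^ 2)) ?_)
    · simpa using ENNReal.mul_ne_top (by simp) (measure_ne_top ν _)
    · intro x
      simp only
      rw [← ofReal_norm, ← ENNReal.ofReal_pow (norm_nonneg _)]
      exact ENNReal.ofReal_le_ofReal (pow_le_pow_left₀ (norm_nonneg _) (hC x) 2)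
  set S := I.toReal with hS
  have hS0 : 0 ≤ S := ENNReal.toReal_nonneg
  have hIS : I = ENNReal.ofReal S := (ENNReal.ofReal_toReal hIfin).symm
  set M' := M.toReal with hM'
  have hM0 : 0 ≤ M' := ENNReal.toReal_nonneg
  have hMM : M = ENNReal.ofReal M' := (ENNReal.ofReal_toReal hMtop).symm
  set c := blsC ν f with hc
  set R := ∑ k ∈ s, ‖c k‖ ^ 2 with hR
  have hR0 : 0 ≤ R := Finset.sum_nonneg fun _ _ => by positivity
  have hKR : K * R ≤ ∑ p ∈ Finset.range K, ∑ q ∈ Finset.range (n + K - 1), ‖c (m + 1 + q - p)‖ ^ 2 := by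
    have : (K : ℝ) * R = ∑ p ∈ Finset.range K, R := by simp
    rw [this]
    apply Finset.sum_le_sum
    intro p hp
    rw [Finset.mem_range] at hp
    have hinj : Set.InjOn (fun q : ℕ => m + 1 + (q : ℤ) - p) (Finset.range (n + K - 1)) := by
      intro x _ y _ hxy
      simp only at hxy
      omega
    rw [← Finset.sum_image (f := fun k => ‖c k‖ ^ 2) hinj]
    apply Finset.sum_le_sum_of_subset_of_nonneg
    · intro k hk
      rw [hs, Finset.mem_Icc] at hk
      rw [Finset.mem_image]
      refine ⟨(k - (m + 1) + p).toNat, ?_, ?_⟩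
      · rw [Finset.mem_range]; omega
      · omega
    · intro _ _ _; positivity
  have hKR2 : K * R ≤ K * (n + 2 * (K - 1)) * M' * S := by
    have h1 := (ENNReal.ofReal_le_ofReal hKR).trans hdual
    have h0 : (0 : ℝ) ≤ K * (n + 2 * (K - 1)) := by
      apply mul_nonneg (by positivity)
      have : (0 : ℝ) ≤ n := by positivity
      linarith
    rw [hIS, hMM, ← ENNReal.ofReal_mul h0, ← ENNReal.ofReal_mul (by positivity)] at h1
    exact (ENNReal.ofReal_le_ofReal_iff (by positivity)).1 h1
  have hRle : R ≤ (n + 2 / δ) * M' * S := by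
    have h1 : R ≤ (n + 2 * (K - 1)) * M' * S := by
      have : (K : ℝ) * R ≤ K * ((n + 2 * (K - 1)) * M' * S) := by linarith
      exact le_of_mul_le_mul_left this (by linarith)
    refine h1.trans ?_
    gcongr
    rw [show 2 / δ = 2 * (1 / δ) by ring]
    linarith
  have hCS : S ^ 2 ≤ A * R := by
    have h1 : S ≤ ∑ k ∈ s, ‖a k‖ * ‖c k‖ := by
      have : S = ‖(S : ℂ)‖ := by rw [Complex.norm_real, Real.norm_of_nonneg hS0]
      rw [this, hid]
      refine (norm_sum_le _ _).trans (le_of_eq ?_)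
      simp only [norm_mul, RCLike.norm_conj]
    exact (pow_le_pow_left₀ hS0 h1 2).trans (Finset.sum_mul_sq_le_sq_mul_sq _ _ _)
  have hfinal : S ≤ (n + 2 / δ) * M' * A := by
    rcases hS0.eq_or_lt with h | h
    · rw [← h]; positivity
    · have : S * S ≤ S * ((n + 2 / δ) * M' * A) := by
        have := mul_le_mul_of_nonneg_left hRle hA0
        nlinarith
      exact le_of_mul_le_mul_left this h
  rw [hIS, hMM, ← ENNReal.ofReal_mul hcpos.le, ← ENNReal.ofReal_mul (by positivity)]
  exact ENNReal.ofReal_le_ofReal hfinal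
end

section
/- (Donoho–Logan large sieve for Paley–Wiener) Let W > 0 and let f ∈ L¹(ℝ) have distributional Fourier transform supported in [−πW, πW]. Define the maximum Nyquist density ρ_ℝ(Ω,W) = W · sup_{t∈ℝ} |Ω ∩ [t, t+1/W]| for a measurable set Ω ⊆ ℝ, where |·| denotes Lebesgue measure. Then ∫_Ω |f(t)| dt ≤ (π/2) · ρ_ℝ(Ω,W) · ∫_ℝ |f(t)| dt. In particular, if ρ_ℝ(Ω,W) < 1/π then ‖f·χ_Ω‖₁ < (1/2)‖f‖₁. -/
open MeasureTheory


lemma dl_contDiff_sinc : ContDiff ℝ 2 Real.sinc := by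
  rw [contDiff_iff_contDiffAt]
  intro x
  by_cases hx : x = 0
  · subst hx
    have h : AnalyticAt ℝ Real.sin 0 := Real.analyticAt_sin
    obtain ⟨p, hp⟩ := h
    have := hp.has_fpower_series_dslope_fslope
    rw [← Real.sinc_eq_dslope] at this
    exact this.analyticAt.contDiffAt
  · have : ContDiffAt ℝ 2 (fun y => Real.sin y / y) x :=
      Real.contDiff_sin.contDiffAt.div contDiffAt_id hx
    refine this.congr_of_eventuallyEq ?_
    filter_upwards [isOpen_ne.mem_nhds hx] with y hy
    exact Real.sinc_of_ne_zero hy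

lemma dl_mul_sinc (x : ℝ) : x * Real.sinc x = Real.sin x := by
  by_cases hx : x = 0
  · simp [hx]
  · rw [Real.sinc_of_ne_zero hx]; field_simp

lemma dl_sinc_pos {x : ℝ} (h1 : -Real.pi < x) (h2 : x < Real.pi) : 0 < Real.sinc x := by
  rcases lt_trichotomy x 0 with h | h | h
  · rw [← Real.sinc_neg, Real.sinc_of_ne_zero (by linarith)]
    exact div_pos (Real.sin_pos_of_pos_of_lt_pi (by linarith) (by linarith)) (by linarith)
  · simp [h]
  · rw [Real.sinc_of_ne_zero (by linarith)]
    exact div_pos (Real.sin_pos_of_pos_of_lt_pi (by linarith) (by linarith)) (by linarith)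

/-- first and second derivative data of `1/sinc (x/2)`, convexity on `[-π, π]`. -/
lemma dl_psi : ∃ p' p'' : ℝ → ℝ,
    (∀ x ∈ Set.Icc (-Real.pi) Real.pi, HasDerivAt (fun y => 1 / Real.sinc (y / 2)) (p' x) x) ∧
    (∀ x ∈ Set.Icc (-Real.pi) Real.pi, HasDerivAt p' (p'' x) x) ∧
    ContinuousOn p'' (Set.Icc (-Real.pi) Real.pi) ∧
    (∀ x ∈ Set.Icc (-Real.pi) Real.pi, x ≠ 0 → 0 ≤ p'' x) := by
  set S := Real.sinc with hS
  set S1 := deriv S with hS1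
  set S2 := deriv S1 with hS2
  have hC := dl_contDiff_sinc
  have hC1 : ContDiff ℝ 1 S1 := by
    have := hC.iterate_deriv' 1 1
    simpa using this
  have d0 : ∀ x, HasDerivAt S (S1 x) x := fun x =>
    (hC.differentiable (by norm_num) x).hasDerivAt
  have d1 : ∀ x, HasDerivAt S1 (S2 x) x := fun x =>
    (hC1.differentiable (by norm_num) x).hasDerivAt
  have c0 : Continuous S := hC.continuous
  have c1 : Continuous S1 := hC1.continuous
  have c2 : Continuous S2 := hC1.continuous_deriv (by norm_num)
  have pos : ∀ x ∈ Set.Icc (-Real.pi) Real.pi, 0 < S (x / 2) := fun x hx =>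
    dl_sinc_pos (by linarith [hx.1, Real.pi_pos]) (by linarith [hx.2, Real.pi_pos])
  refine ⟨fun x => - (S1 (x/2) / 2) / S (x/2) ^ 2,
    fun x => (2 * S1 (x/2) ^ 2 - S (x/2) * S2 (x/2)) / (4 * S (x/2) ^ 3), ?_, ?_, ?_, ?_⟩
  · intro x hx
    have h0 : HasDerivAt (fun y => S (y / 2)) (S1 (x/2) / 2) x := by
      simpa [Function.comp_def, div_eq_mul_inv] using
        (d0 (x/2)).comp x ((hasDerivAt_id x).div_const 2)
    have h := h0.inv (pos x hx).ne'
    simpa [one_div] using! h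
  · intro x hx
    have h0 : HasDerivAt (fun y => S (y / 2)) (S1 (x/2) / 2) x := by
      simpa [Function.comp_def, div_eq_mul_inv] using
        (d0 (x/2)).comp x ((hasDerivAt_id x).div_const 2)
    have h1 : HasDerivAt (fun y => S1 (y / 2)) (S2 (x/2) / 2) x := by
      simpa [Function.comp_def, div_eq_mul_inv] using
        (d1 (x/2)).comp x ((hasDerivAt_id x).div_const 2)
    have hne := (pos x hx).ne'
    have h : HasDerivAt (fun x => - (S1 (x/2) / 2) / S (x/2) ^ 2) _ x :=
      (h1.div_const 2).neg.div (h0.pow 2) (by simpa using hne)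
    refine h.congr_deriv ?_
    simp only [Pi.neg_apply]
    field_simp
    ring
  · apply ContinuousOn.div
    · fun_prop
    · fun_prop
    · intro x hx
      have := pos x hx
      positivity
  · intro x hx hx0
    have hp := pos x hx
    apply div_nonneg _ (by positivity)
    obtain ⟨y, rfl⟩ : ∃ y, x = 2 * y := ⟨x / 2, by ring⟩
    simp only [mul_div_cancel_left₀ y (two_ne_zero' ℝ)] at hp ⊢
    have hy : y ≠ 0 := by rintro rfl; simp at hx0
    have e0 := dl_mul_sinc
    have e1 : ∀ y, S y + y * S1 y = Real.cos y := by
      intro y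
      have h := (hasDerivAt_id y).mul (d0 y)
      have h' : HasDerivAt Real.sin (1 * S y + y * S1 y) y := by
        have he : Real.sin = fun z => z * S z := funext fun z => (e0 z).symm
        rw [he]; exact h
      have := h'.unique (Real.hasDerivAt_sin y)
      linarith
    have e2 : ∀ y, 2 * S1 y + y * S2 y = - Real.sin y := by
      intro y
      have h := (d0 y).add ((hasDerivAt_id y).mul (d1 y))
      have h' : HasDerivAt Real.cos (S1 y + (1 * S1 y + y * S2 y)) y := by
        have he : Real.cos = fun z => S z + z * S1 z := funext fun z => (e1 z).symm
        rw [he]; exact h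
      have := h'.unique (Real.hasDerivAt_cos y)
      linarith
    have a0 := e0 y
    have a1 := e1 y
    have a2 := e2 y
    rw [← hS] at a0
    have sc := Real.sin_sq_add_cos_sq y
    have key : y ^ 2 * (2 * S1 y ^ 2 - S y * S2 y)
        = (Real.cos y - S y) ^ 2 + (1 - S y ^ 2) := by
      have g1 : y * S1 y = Real.cos y - S y := by linarith
      have g2 : y * S2 y = - Real.sin y - 2 * S1 y := by linarith
      calc y ^ 2 * (2 * S1 y ^ 2 - S y * S2 y)
          = 2 * (y * S1 y) ^ 2 - (y * S y) * (y * S2 y) := by ring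
        _ = 2 * (y * S1 y) ^ 2 + Real.sin y ^ 2 + 2 * S y * (y * S1 y) := by
            rw [g2, ← a0]; ring
        _ = _ := by rw [g1]; linear_combination sc
    have hle : S y ≤ 1 := Real.sinc_le_one y
    have hn : 0 ≤ y ^ 2 * (2 * S1 y ^ 2 - S y * S2 y) := by
      rw [key]
      have : S y ^ 2 ≤ 1 := by nlinarith
      nlinarith [sq_nonneg (Real.cos y - S y)]
    exact nonneg_of_mul_nonneg_right hn (by positivity)

/-- Real cosine coefficients are alternating and summable for a convex even function. -/
lemma dl_cos_coeff (p p' p'' : ℝ → ℝ)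
    (h1 : ∀ x ∈ Set.Icc (-Real.pi) Real.pi, HasDerivAt p (p' x) x)
    (h2 : ∀ x ∈ Set.Icc (-Real.pi) Real.pi, HasDerivAt p' (p'' x) x)
    (h3 : ContinuousOn p'' (Set.Icc (-Real.pi) Real.pi))
    (h4 : ∀ x ∈ Set.Icc (-Real.pi) Real.pi, x ≠ 0 → 0 ≤ p'' x) (n : ℤ) (hn : n ≠ 0) :
    0 ≤ Real.cos (n * Real.pi) * (∫ x in (-Real.pi)..Real.pi, p x * Real.cos (n * x)) ∧
    Real.cos (n * Real.pi) * (∫ x in (-Real.pi)..Real.pi, p x * Real.cos (n * x)) ≤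
      (2 * ∫ x in (-Real.pi)..Real.pi, p'' x) * (1 / (n:ℝ)^2) := by
  have hpi : -Real.pi ≤ Real.pi := by linarith [Real.pi_pos]
  have hu : Set.uIcc (-Real.pi) Real.pi = Set.Icc (-Real.pi) Real.pi := Set.uIcc_of_le hpi
  have hcp : ContinuousOn p (Set.Icc (-Real.pi) Real.pi) := fun x hx =>
    (h1 x hx).continuousAt.continuousWithinAt
  set ε := Real.cos (n * Real.pi) with hε
  have hε2 : ε ^ 2 = 1 := by
    have := Real.sin_sq_add_cos_sq (n * Real.pi)
    rw [Real.sin_int_mul_pi] at this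
    linarith
  have i1 : IntervalIntegrable (fun x => p'' x * (ε - Real.cos (n * x))) volume
      (-Real.pi) Real.pi := by
    apply ContinuousOn.intervalIntegrable
    rw [hu]; fun_prop
  have i2 : IntervalIntegrable (fun x => (n:ℝ)^2 * (p x * Real.cos (n * x))) volume
      (-Real.pi) Real.pi := by
    apply ContinuousOn.intervalIntegrable
    rw [hu]; fun_prop
  have i3 : IntervalIntegrable p'' volume (-Real.pi) Real.pi := by
    apply ContinuousOn.intervalIntegrable
    rw [hu]; fun_prop
  have ibp : ∫ x in (-Real.pi)..Real.pi, (p'' x * (ε - Real.cos (n * x))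
      - (n:ℝ)^2 * (p x * Real.cos (n * x))) = 0 := by
    rw [intervalIntegral.integral_eq_sub_of_hasDerivAt
      (f := fun x => p' x * (ε - Real.cos (n * x)) - n * (p x * Real.sin (n * x))) ?_ (i1.sub i2)]
    · simp [hε, Real.sin_int_mul_pi]
    · intro x hx
      rw [hu] at hx
      have hl : HasDerivAt (fun x : ℝ => (n:ℝ) * x) n x := by
        simpa using (hasDerivAt_id x).const_mul (n:ℝ)
      have d := ((h2 x hx).mul ((hasDerivAt_const x ε).sub hl.cos)).sub
        (((h1 x hx).mul hl.sin).const_mul (n:ℝ))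
      refine d.congr_deriv ?_
      simp
      ring
  rw [intervalIntegral.integral_sub i1 i2, intervalIntegral.integral_const_mul] at ibp
  have hn2 : (0:ℝ) < (n:ℝ)^2 := by positivity
  have e : ε * (∫ x in (-Real.pi)..Real.pi, p x * Real.cos (n * x)) =
      (∫ x in (-Real.pi)..Real.pi, p'' x * (1 - ε * Real.cos (n * x))) * (1 / (n:ℝ)^2) := by
    have : (∫ x in (-Real.pi)..Real.pi, p'' x * (1 - ε * Real.cos (n * x)))
        = ε * ∫ x in (-Real.pi)..Real.pi, p'' x * (ε - Real.cos (n * x)) := by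
      rw [← intervalIntegral.integral_const_mul]
      congr 1; ext x
      linear_combination (-p'' x) * hε2
    rw [this]
    field_simp
    linear_combination (-ε) * ibp
  have hc : ∀ x : ℝ, |ε * Real.cos (n * x)| ≤ 1 := fun x => by
    rw [abs_mul]
    exact mul_le_one₀ (Real.abs_cos_le_one _) (abs_nonneg _) (Real.abs_cos_le_one _)
  have hae : ∀ᵐ x : ℝ, x ≠ 0 := by simp [ae_iff]
  rw [e]
  constructor
  · apply mul_nonneg _ (by positivity)
    apply intervalIntegral.integral_nonneg_of_ae_restrict hpi
    filter_upwards [ae_restrict_of_ae hae, ae_restrict_mem measurableSet_Icc] with x hx hx'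
    exact mul_nonneg (h4 x hx' hx) (by linarith [(abs_le.1 (hc x)).2])
  · apply mul_le_mul_of_nonneg_right _ (by positivity)
    rw [← intervalIntegral.integral_const_mul]
    apply intervalIntegral.integral_mono_ae_restrict hpi
    · apply ContinuousOn.intervalIntegrable
      rw [hu]; fun_prop
    · exact i3.const_mul 2
    · filter_upwards [ae_restrict_of_ae hae, ae_restrict_mem measurableSet_Icc] with x hx hx'
      nlinarith [h4 x hx' hx, (abs_le.1 (hc x)).1]

lemma dl_coeff : ∃ c : ℤ → ℂ, Summable (fun n => ‖c n‖) ∧ ∑' n, ‖c n‖ = Real.pi / 2 ∧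
    ∀ ξ ∈ Set.Icc (-Real.pi) Real.pi,
      HasSum (fun n : ℤ => c n * Complex.exp (Complex.I * n * ξ))
        ((1 / Real.sinc (ξ / 2) : ℝ) : ℂ) := by
  obtain ⟨p', p'', h1, h2, h3, h4⟩ := dl_psi
  set p : ℝ → ℝ := fun y => 1 / Real.sinc (y / 2) with hp
  have hpi0 := Real.pi_pos
  have hpi : -Real.pi ≤ Real.pi := by linarith [Real.pi_pos]
  have hu : Set.uIcc (-Real.pi) Real.pi = Set.Icc (-Real.pi) Real.pi := Set.uIcc_of_le hpi
  have hcp : ContinuousOn p (Set.Icc (-Real.pi) Real.pi) := fun x hx =>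
    (h1 x hx).continuousAt.continuousWithinAt
  have heven : ∀ x, p (-x) = p x := fun x => by simp [hp, neg_div]
  have hppi : p Real.pi = Real.pi / 2 := by
    simp only [hp]
    rw [Real.sinc_of_ne_zero (by positivity), Real.sin_pi_div_two]; simp
  have : Fact (0 < 2 * Real.pi) := ⟨by positivity⟩
  set a : ℤ → ℝ := fun n => (1 / (2 * Real.pi)) *
    ∫ x in (-Real.pi)..Real.pi, p x * Real.cos (n * x) with ha
  have hab : ∀ n : ℤ, ‖((a n : ℝ) : ℂ)‖ = Real.cos (n * Real.pi) * a n ∧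
      (n ≠ 0 → ‖((a n : ℝ) : ℂ)‖ ≤ ((1 / (2 * Real.pi)) * (2 * ∫ x in (-Real.pi)..Real.pi, p'' x))
         * (1 / (n:ℝ)^2)) := by
    intro n
    have hnn : 0 ≤ Real.cos (n * Real.pi) * a n := by
      by_cases hn : n = 0
      · subst hn
        simp only [ha, Int.cast_zero, zero_mul, Real.cos_zero, one_mul, mul_one]
        apply mul_nonneg (by positivity)
        apply intervalIntegral.integral_nonneg hpi
        intro x hx
        exact one_div_nonneg.2
          (dl_sinc_pos (by linarith [hx.1, Real.pi_pos]) (by linarith [hx.2, Real.pi_pos])).le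
      · have := (dl_cos_coeff p p' p'' h1 h2 h3 h4 n hn).1
        calc (0:ℝ) ≤ (1 / (2 * Real.pi)) * _ := mul_nonneg (by positivity) this
          _ = _ := by simp only [ha]; ring
    have habs : ‖((a n : ℝ) : ℂ)‖ = Real.cos (n * Real.pi) * a n := by
      have hc : |Real.cos (n * Real.pi)| = 1 := by
        rw [Real.abs_cos_int_mul_pi]
      rw [Complex.norm_real, Real.norm_eq_abs, ← abs_of_nonneg hnn,
        abs_mul (Real.cos _), hc, one_mul]
    refine ⟨habs, fun hn => ?_⟩
    rw [habs]
    have := (dl_cos_coeff p p' p'' h1 h2 h3 h4 n hn).2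
    calc Real.cos (n * Real.pi) * a n = (1 / (2 * Real.pi)) * (Real.cos (n * Real.pi) *
           ∫ x in (-Real.pi)..Real.pi, p x * Real.cos (n * x)) := by simp only [ha]; ring
      _ ≤ (1 / (2 * Real.pi)) * _ := mul_le_mul_of_nonneg_left this (by positivity)
      _ = _ := by ring
  have hsum : Summable (fun n => ‖((a n : ℝ) : ℂ)‖) := by
    have hs : Summable (fun n : ℤ => ((1 / (2 * Real.pi)) *
        (2 * ∫ x in (-Real.pi)..Real.pi, p'' x)) * (1 / (n:ℝ)^2)) :=
      (Real.summable_one_div_int_pow.2 (by norm_num)).mul_left _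
    refine Summable.of_norm_bounded_eventually hs ?_
    have : ∀ᶠ n : ℤ in Filter.cofinite, n ≠ 0 := by
      rw [Filter.eventually_cofinite]; simp
    filter_upwards [this] with n hn
    simpa using (hab n).2 hn
  -- the circle function
  let F : C(AddCircle (2 * Real.pi), ℂ) :=
    ⟨AddCircle.liftIco (2 * Real.pi) (-Real.pi) (fun x => ((p x : ℝ) : ℂ)),
     AddCircle.liftIco_continuous
      (by have : -Real.pi + 2 * Real.pi = Real.pi := by ring
          rw [this, heven])
      (by have : -Real.pi + 2 * Real.pi = Real.pi := by ring
          rw [this]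
          exact Complex.continuous_ofReal.comp_continuousOn hcp)⟩
  have hF : ∀ n, fourierCoeff F n = ((a n : ℝ) : ℂ) := by
    intro n
    have : fourierCoeff F n = _ := fourierCoeff_liftIco_eq (T := 2 * Real.pi) (a := -Real.pi)
      (fun x => ((p x : ℝ) : ℂ)) n
    rw [this, fourierCoeffOn_eq_integral]
    have e1 : -Real.pi + 2 * Real.pi = Real.pi := by ring
    have e2 : -Real.pi + 2 * Real.pi - -Real.pi = 2 * Real.pi := by ring
    have e3 : (-Real.pi + 2 * Real.pi - -Real.pi : ℝ) = 2 * Real.pi := by ring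
    have hint : ∀ x : ℝ, (fourier (-n) (x : AddCircle (-Real.pi + 2 * Real.pi - -Real.pi)))
        • ((p x : ℝ) : ℂ) = ((p x * Real.cos (n * x) : ℝ) : ℂ)
          - Complex.I * ((p x * Real.sin (n * x) : ℝ) : ℂ) := by
      intro x
      rw [fourier_coe_apply, e3]
      have : 2 * (Real.pi : ℂ) * Complex.I * ((-n : ℤ) : ℂ) * x / ((2 * Real.pi : ℝ) : ℂ)
          = ((-(n * x) : ℝ) : ℂ) * Complex.I := by
        have : (Real.pi : ℂ) ≠ 0 := by exact_mod_cast hpi0.ne'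
        push_cast; field_simp
      rw [this, Complex.exp_mul_I, ← Complex.ofReal_cos, ← Complex.ofReal_sin, Real.cos_neg,
        Real.sin_neg]
      push_cast
      simp only [smul_eq_mul]
      ring
    simp_rw [hint]
    rw [e1]
    have ic : IntervalIntegrable (fun x => p x * Real.cos (n * x)) volume
        (-Real.pi) Real.pi := by
      apply ContinuousOn.intervalIntegrable
      rw [hu]; fun_prop
    have is : IntervalIntegrable (fun x => p x * Real.sin (n * x)) volume
        (-Real.pi) Real.pi := by
      apply ContinuousOn.intervalIntegrable
      rw [hu]; fun_prop
    have hodd : ∫ x in (-Real.pi)..Real.pi, p x * Real.sin (n * x) = 0 := by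
      have h := intervalIntegral.integral_comp_neg (a := -Real.pi) (b := Real.pi)
        (fun x => p x * Real.sin (n * x))
      simp only [heven, mul_neg, Real.sin_neg, neg_neg, intervalIntegral.integral_neg] at h
      linarith
    have ic' : IntervalIntegrable (fun x => ((p x * Real.cos (n * x) : ℝ) : ℂ)) volume
        (-Real.pi) Real.pi := ⟨ic.1.ofReal, ic.2.ofReal⟩
    have is' : IntervalIntegrable (fun x => ((p x * Real.sin (n * x) : ℝ) : ℂ)) volume
        (-Real.pi) Real.pi := ⟨is.1.ofReal, is.2.ofReal⟩
    rw [intervalIntegral.integral_sub ic' (is'.const_mul _),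
      intervalIntegral.integral_const_mul, intervalIntegral.integral_ofReal,
      intervalIntegral.integral_ofReal, hodd]
    simp [ha]
    left; ring
  have hsF : Summable (fourierCoeff F) := by
    have : fourierCoeff F = fun n => ((a n : ℝ) : ℂ) := funext hF
    rw [this]; exact hsum.of_norm
  have hpt : ∀ ξ ∈ Set.Ico (-Real.pi) Real.pi,
      HasSum (fun n : ℤ => ((a n : ℝ) : ℂ) * Complex.exp (Complex.I * n * ξ)) ((p ξ : ℝ) : ℂ) := by
    intro ξ hξ
    have h := has_pointwise_sum_fourier_series_of_summable hsF (ξ : AddCircle (2 * Real.pi))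
    have hv : F (ξ : AddCircle (2 * Real.pi)) = ((p ξ : ℝ) : ℂ) :=
      AddCircle.liftIco_coe_apply (f := fun x => ((p x : ℝ) : ℂ)) (by
        have : -Real.pi + 2 * Real.pi = Real.pi := by ring
        rwa [this])
    rw [hv] at h
    convert h using 2 with n
    rw [hF, fourier_coe_apply, smul_eq_mul]
    congr 2
    have : (Real.pi : ℂ) ≠ 0 := by exact_mod_cast hpi0.ne'
    push_cast; field_simp
  have hpt' : ∀ ξ ∈ Set.Icc (-Real.pi) Real.pi,
      HasSum (fun n : ℤ => ((a n : ℝ) : ℂ) * Complex.exp (Complex.I * n * ξ)) ((p ξ : ℝ) : ℂ) := by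
    intro ξ hξ
    rcases eq_or_lt_of_le hξ.2 with h | h
    · subst ξ
      have := hpt (-Real.pi) ⟨le_rfl, by linarith⟩
      rw [heven] at this
      convert this using 2 with n
      congr 1
      rw [Complex.exp_eq_exp_iff_exists_int]
      exact ⟨n, by push_cast; ring⟩
    · exact hpt ξ ⟨hξ.1, h⟩
  refine ⟨fun n => ((a n : ℝ) : ℂ), hsum, ?_, hpt'⟩
  have h := hpt' Real.pi ⟨hpi, le_rfl⟩
  rw [hppi] at h
  have h' : HasSum (fun n : ℤ => ‖((a n : ℝ) : ℂ)‖) (Real.pi / 2) := by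
    rw [← Complex.hasSum_ofReal]
    convert h using 2 with n
    rw [(hab n).1]
    have : Complex.I * n * Real.pi = ((n * Real.pi : ℝ) : ℂ) * Complex.I := by push_cast; ring
    rw [this, Complex.exp_mul_I, ← Complex.ofReal_cos, ← Complex.ofReal_sin, Real.sin_int_mul_pi]
    push_cast; ring
  exact h'.tsum_eq

lemma dl_fourier_eq (h : ℝ → ℂ) (w : ℝ) : FourierTransform.fourier h w =
    ∫ t : ℝ, h t * Complex.exp (-(Complex.I * ((2 * Real.pi * w : ℝ) : ℂ) * t)) := by
  rw [Real.fourier_real_eq_integral_exp_smul]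
  congr 1; ext t
  rw [smul_eq_mul, mul_comm]
  congr 2
  push_cast; ring

lemma dl_fourier_eq' (h : ℝ → ℂ) (ξ : ℝ) :
    ∫ t : ℝ, h t * Complex.exp (-(Complex.I * ξ * t)) =
     FourierTransform.fourier h (ξ / (2 * Real.pi)) := by
  rw [dl_fourier_eq]
  have : 2 * Real.pi * (ξ / (2 * Real.pi)) = ξ := by field_simp
  rw [this]

lemma dl_unique (h : ℝ → ℂ) (hh : Integrable h)
    (h0 : ∀ ξ : ℝ, ∫ t : ℝ, h t * Complex.exp (-(Complex.I * ξ * t)) = 0) :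
    ∀ᵐ x, h x = 0 := by
  have hF : FourierTransform.fourier h = 0 := by
    ext w; rw [dl_fourier_eq]; exact h0 _
  apply ae_eq_zero_of_integral_contDiff_smul_eq_zero hh.locallyIntegrable
  intro g g_smooth g_cpt
  have hg₁ : HasCompactSupport (Complex.ofRealCLM ∘ g) := g_cpt.comp_left rfl
  have hg₂ : ContDiff ℝ (↑(⊤ : ℕ∞)) (Complex.ofRealCLM ∘ g) := by fun_prop
  set gs : SchwartzMap ℝ ℂ := hg₁.toSchwartzMap hg₂ with hgs
  set G : SchwartzMap ℝ ℂ := FourierTransformInv.fourierInv gs with hG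
  have e : FourierTransform.fourier G = gs := by simp [hG]
  have e' : FourierTransform.fourier (G : ℝ → ℂ) = (gs : ℝ → ℂ) := by
    rw [← SchwartzMap.fourier_coe, e]
  have key := VectorFourier.integral_fourierIntegral_smul_eq_flip (μ := volume) (ν := volume)
    (L := innerₗ ℝ) (f := h) (g := (G : ℝ → ℂ)) Real.continuous_fourierChar (by fun_prop)
    hh G.integrable
  have k1 : VectorFourier.fourierIntegral Real.fourierChar volume (innerₗ ℝ) h = 0 := hF
  have k2 : VectorFourier.fourierIntegral Real.fourierChar volume (innerₗ ℝ).flip (G : ℝ → ℂ)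
     = gs := by
    rw [flip_innerₗ]; exact e'
  rw [k1, k2] at key
  simp only [Pi.zero_apply, zero_smul, integral_zero] at key
  rw [key]
  congr 1; ext x
  simp [hgs, mul_comm]

lemma dl_sumL1 (F : ℤ → ℝ → ℂ) (hF : ∀ n, Integrable (F n))
    (hs : Summable fun n => ∫ t, ‖F n t‖) :
    ∃ u : ℝ → ℂ, Integrable u ∧ ∫ t, ‖u t‖ ≤ ∑' n, ∫ t, ‖F n t‖ ∧
      ∀ e : ℝ → ℂ, Continuous e → (∀ t, ‖e t‖ ≤ 1) →
        ∫ t, u t * e t = ∑' n, ∫ t, F n t * e t := by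
  set U : ℤ → Lp ℂ 1 (volume : Measure ℝ) := fun n => (hF n).toL1 (F n) with hU
  have hn : ∀ n, ‖U n‖ = ∫ t, ‖F n t‖ := fun n => by
    rw [hU, L1.norm_of_fun_eq_integral_norm]
  have hsU : Summable fun n => ‖U n‖ := by simpa [hn] using hs
  have hfin : ∑' n, ‖U n‖ₑ ≠ ⊤ := tsum_enorm_ne_top_iff_summable_norm.2 hsU
  have hae := Lp.hasSum_coeFn_tsum hfin
  have hae2 : ∀ᵐ t, ∀ n, U n t = F n t := ae_all_iff.2 fun n => (hF n).coeFn_toL1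
  refine ⟨⇑(∑' n, U n), L1.integrable_coeFn _, ?_, ?_⟩
  · rw [← L1.norm_eq_integral_norm]
    simp_rw [← hn]
    exact norm_tsum_le_tsum_norm hsU
  · intro e he he1
    have hFe : ∀ n, Integrable (fun t => F n t * e t) := fun n =>
      (hF n).mul_bdd (c := 1) he.aestronglyMeasurable (Filter.Eventually.of_forall he1)
    rw [integral_tsum_of_summable_integral_norm hFe]
    · apply integral_congr_ae
      filter_upwards [hae, hae2] with t ht ht2
      rw [← ht.tsum_eq, ← tsum_mul_right]
      simp_rw [ht2]
    · refine Summable.of_nonneg_of_le (fun n => integral_nonneg fun _ => norm_nonneg _)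
        (fun n => integral_mono (hFe n).norm (hF n).norm fun t => ?_) hs
      simp only [norm_mul]
      exact mul_le_of_le_one_right (norm_nonneg _) (he1 t)

lemma dl_box (W : ℝ) (hW : 0 < W) (ξ : ℝ) :
    ∫ t : ℝ, (Set.Icc (-(1 / W / 2)) (1 / W / 2)).indicator (fun _ => (W : ℂ)) t *
      Complex.exp (-(Complex.I * ξ * t)) = ((Real.sinc (ξ / W / 2) : ℝ) : ℂ) := by
  have h1 : ∀ t : ℝ, (Set.Icc (-(1 / W / 2)) (1 / W / 2)).indicator (fun _ => (W : ℂ)) t *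
      Complex.exp (-(Complex.I * ξ * t)) = (Set.Icc (-(1 / W / 2)) (1 / W / 2)).indicator
        (fun t : ℝ => (W : ℂ) * Complex.exp (-(Complex.I * ξ * t))) t := by
    intro t
    by_cases ht : t ∈ Set.Icc (-(1 / W / 2)) (1 / W / 2)
    · rw [Set.indicator_of_mem ht, Set.indicator_of_mem ht]
    · rw [Set.indicator_of_notMem ht, Set.indicator_of_notMem ht, zero_mul]
  have hd : 0 < 1 / W / 2 := by positivity
  simp_rw [h1]
  rw [integral_indicator measurableSet_Icc, integral_Icc_eq_integral_Ioc,
    ← intervalIntegral.integral_of_le (by linarith), intervalIntegral.integral_const_mul]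
  have hWc : (W : ℂ) ≠ 0 := by exact_mod_cast hW.ne'
  by_cases hξ : ξ = 0
  · subst hξ
    simp
    field_simp
  · have h2 := intervalIntegral.integral_comp_mul_left (a := -(1 / W / 2)) (b := 1 / W / 2)
      (fun t : ℝ => Complex.exp (t * Complex.I)) (c := -ξ) (by simpa using hξ)
    have h3 : (fun t : ℝ => Complex.exp (-(Complex.I * ξ * t))) =
       fun t : ℝ => Complex.exp (((-ξ * t : ℝ) : ℂ) * Complex.I) := by
      ext t; congr 1; push_cast; ring
    rw [h3, h2]
    have h4 : -ξ * -(1 / W / 2) = -(-ξ * (1 / W / 2)) := by ring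
    rw [h4, integral_exp_mul_I_eq_sinc]
    have h5 : -ξ * (1 / W / 2) = - (ξ / W / 2) := by ring
    rw [h5, Real.sinc_neg]
    have hξc : (ξ : ℂ) ≠ 0 := by exact_mod_cast hξ
    simp
    field_simp

open scoped Convolution in
lemma dl_sieve (W : ℝ) (hW : 0 < W) (u : ℝ → ℂ) (hu : Integrable u) (Ω : Set ℝ)
    (hΩ : MeasurableSet Ω) :
    ∃ k : ℝ → ℂ, Integrable k ∧
     (∀ ξ : ℝ, ∫ t : ℝ, k t * Complex.exp (-(Complex.I * ξ * t)) =
       ((Real.sinc (ξ / W / 2) : ℝ) : ℂ) * ∫ t : ℝ, u t * Complex.exp (-(Complex.I * ξ * t))) ∧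
     ∫ t in Ω, ‖k t‖ ≤ (W * ⨆ t : ℝ, (volume (Ω ∩ Set.Icc t (t + 1 / W))).toReal) *
        ∫ t, ‖u t‖ := by
  set δ := 1 / W / 2 with hδ
  have hδ0 : 0 < δ := by positivity
  set g : ℝ → ℂ := (Set.Icc (-δ) δ).indicator (fun _ => (W : ℂ)) with hg
  have hgi : Integrable g := by
    rw [hg, integrable_indicator_iff measurableSet_Icc]
    exact integrableOn_const (by simp) 
  refine ⟨g ⋆[ContinuousLinearMap.mul ℂ ℂ] u, hgi.integrable_convolution _ hu, ?_, ?_⟩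
  · intro ξ
    rw [dl_fourier_eq', Real.fourier_mul_convolution_eq hgi hu, ← dl_fourier_eq',
      ← dl_fourier_eq', dl_box W hW]
  · have hP : Integrable (fun p : ℝ × ℝ => ‖u p.2‖ * ‖g (p.1 - p.2)‖) (volume.prod volume) :=
      hu.norm.convolution_integrand (ContinuousLinearMap.mul ℝ ℝ) hgi.norm
    have hP' : Integrable (fun p : ℝ × ℝ => ‖u p.2‖ * ‖g (p.1 - p.2)‖)
        ((volume.restrict Ω).prod volume) := by
      have : (volume.restrict Ω).prod (volume : Measure ℝ)
          = (volume.prod volume).restrict (Ω ×ˢ Set.univ) := by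
        rw [← Measure.prod_restrict, Measure.restrict_univ]
      rw [this]
      exact hP.restrict
    set M := ⨆ t : ℝ, (volume (Ω ∩ Set.Icc t (t + 1 / W))).toReal with hM
    have hbdd : BddAbove (Set.range fun t : ℝ =>
        (volume (Ω ∩ Set.Icc t (t + 1 / W))).toReal) := by
      refine ⟨1 / W, ?_⟩
      rintro _ ⟨t, rfl⟩
      have : volume (Ω ∩ Set.Icc t (t + 1 / W)) ≤ ENNReal.ofReal (1 / W) := by
        refine (measure_mono Set.inter_subset_right).trans ?_
        rw [Real.volume_Icc]; simp
      exact ENNReal.toReal_le_of_le_ofReal (by positivity) this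
    calc ∫ t in Ω, ‖(g ⋆[ContinuousLinearMap.mul ℂ ℂ] u) t‖
        ≤ ∫ t in Ω, ∫ s, ‖u s‖ * ‖g (t - s)‖ := by
          apply integral_mono
          · exact (hgi.integrable_convolution _ hu).norm.restrict
          · exact hP'.integral_prod_left
          · intro t
            simp only
            rw [convolution_eq_swap]
            refine (norm_integral_le_integral_norm _).trans (le_of_eq ?_)
            congr 1; ext s
            simp [mul_comm]
      _ = ∫ s, ∫ t in Ω, ‖u s‖ * ‖g (t - s)‖ := integral_integral_swap hP'
      _ ≤ ∫ s, ‖u s‖ * (W * M) := by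
          apply integral_mono hP'.integral_prod_right (hu.norm.mul_const _)
          intro s
          simp only
          rw [integral_const_mul]
          apply mul_le_mul_of_nonneg_left _ (norm_nonneg _)
          have h1 : ∀ t, ‖g (t - s)‖ =
              (Set.Icc (s - δ) (s - δ + 1 / W)).indicator (fun _ => W) t := by
            intro t
            have hiff : t - s ∈ Set.Icc (-δ) δ ↔ t ∈ Set.Icc (s - δ) (s - δ + 1 / W) := by
              simp only [Set.mem_Icc, hδ]
              constructor <;> rintro ⟨a, b⟩ <;> constructor <;> linarith
            by_cases ht : t - s ∈ Set.Icc (-δ) δ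
            · rw [hg, Set.indicator_of_mem ht, Set.indicator_of_mem (hiff.1 ht)]
              simp [abs_of_pos hW]
            · rw [hg, Set.indicator_of_notMem ht, Set.indicator_of_notMem (fun h => ht (hiff.2 h))]
              simp
          simp_rw [h1]
          rw [setIntegral_indicator measurableSet_Icc, setIntegral_const, smul_eq_mul, mul_comm]
          apply mul_le_mul_of_nonneg_left _ hW.le
          exact le_ciSup hbdd (s - δ)
      _ = (W * M) * ∫ t, ‖u t‖ := by rw [integral_mul_const, mul_comm]

lemma dl_shift (f : ℝ → ℂ) (c : ℂ) (a ξ : ℝ) :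
    ∫ t : ℝ, (c * f (t + a)) * Complex.exp (-(Complex.I * ξ * t)) =
      c * Complex.exp (Complex.I * ξ * a) *
        ∫ t : ℝ, f t * Complex.exp (-(Complex.I * ξ * t)) := by
  rw [← integral_const_mul, ← integral_add_right_eq_self
    (fun t : ℝ => c * Complex.exp (Complex.I * ξ * a) *
      (f t * Complex.exp (-(Complex.I * ξ * t)))) a]
  congr 1; ext t
  have : Complex.exp (-(Complex.I * ξ * t)) = Complex.exp (Complex.I * ξ * a) *
      Complex.exp (-(Complex.I * ξ * ((t + a : ℝ) : ℂ))) := by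
    rw [← Complex.exp_add]; congr 1; push_cast; ring
  rw [this]; ring

lemma dl_main (W : ℝ) (hW : 0 < W)
    (f : ℝ → ℂ) (hf : Integrable f volume)
    (hsupp : ∀ ξ : ℝ, ξ ∉ Set.Icc (-(Real.pi * W)) (Real.pi * W) →
      (∫ t : ℝ, f t * Complex.exp (-(Complex.I * ξ * t))) = 0)
    (Ω : Set ℝ) (hΩ : MeasurableSet Ω) :
    (∫ t in Ω, ‖f t‖) ≤
      (Real.pi / 2) * (W * ⨆ t : ℝ, (volume (Ω ∩ Set.Icc t (t + 1 / W))).toReal) *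
        (∫ t : ℝ, ‖f t‖) := by
  obtain ⟨c, hc1, hc2, hc3⟩ := dl_coeff
  have hFn : ∀ n : ℤ, ∫ t : ℝ, ‖c n * f (t + n / W)‖ = ‖c n‖ * ∫ t, ‖f t‖ := by
    intro n
    simp_rw [norm_mul]
    rw [integral_const_mul, integral_add_right_eq_self (fun t => ‖f t‖)]
  obtain ⟨u, hu, hu1, hu2⟩ := dl_sumL1 (fun n t => c n * f (t + n / W))
    (fun n => (hf.comp_add_right _).const_mul _) (by simp_rw [hFn]; exact hc1.mul_right _)
  simp_rw [hFn] at hu1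
  rw [tsum_mul_right, hc2] at hu1
  obtain ⟨k, hk, hk1, hk2⟩ := dl_sieve W hW u hu Ω hΩ
  have hcont : ∀ ξ : ℝ, Continuous fun t : ℝ => Complex.exp (-(Complex.I * ξ * t)) :=
    fun ξ => by fun_prop
  have hnorm : ∀ ξ t : ℝ, ‖Complex.exp (-(Complex.I * ξ * t))‖ ≤ 1 := fun ξ t => by
    rw [Complex.norm_exp]; simp
  have hint : ∀ (h : ℝ → ℂ), Integrable h → ∀ ξ : ℝ,
      Integrable fun t : ℝ => h t * Complex.exp (-(Complex.I * ξ * t)) := fun h hh ξ =>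
    hh.mul_bdd (c := 1) (hcont ξ).aestronglyMeasurable (Filter.Eventually.of_forall (hnorm ξ))
  have hfk : ∀ᵐ t, f t - k t = 0 := by
    apply dl_unique _ (hf.sub hk)
    intro ξ
    simp only [Pi.sub_apply, sub_mul]
    rw [integral_sub (hint f hf ξ) (hint k hk ξ), hk1, hu2 _ (hcont ξ) (hnorm ξ)]
    have hsh : ∀ n : ℤ, ∫ t : ℝ, (c n * f (t + n / W)) * Complex.exp (-(Complex.I * ξ * t)) =
        c n * Complex.exp (Complex.I * ξ * ((n / W : ℝ) : ℂ)) *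
        ∫ t : ℝ, f t * Complex.exp (-(Complex.I * ξ * t)) := fun n => dl_shift f (c n) (n / W) ξ
    simp only [hsh]
    rw [tsum_mul_right]
    by_cases hξ : ξ ∈ Set.Icc (-(Real.pi * W)) (Real.pi * W)
    · have hξ' : ξ / W ∈ Set.Icc (-Real.pi) Real.pi := by
        constructor
        · rw [le_div_iff₀ hW]; linarith [hξ.1]
        · rw [div_le_iff₀ hW]; exact hξ.2
      have hs := (hc3 _ hξ').tsum_eq
      have he : ∀ n : ℤ, c n * Complex.exp (Complex.I * ξ * ((n / W : ℝ) : ℂ)) =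
          c n * Complex.exp (Complex.I * n * ((ξ / W : ℝ) : ℂ)) := by
        intro n; congr 2; push_cast; ring
      simp_rw [he]
      rw [hs]
      have hpos : 0 < Real.sinc (ξ / W / 2) :=
        dl_sinc_pos (by linarith [hξ'.1, Real.pi_pos]) (by linarith [hξ'.2, Real.pi_pos])
      rw [← mul_assoc, ← Complex.ofReal_mul, mul_one_div_cancel hpos.ne']
      simp
    · rw [hsupp ξ hξ]; simp
  have hM : 0 ≤ W * ⨆ t : ℝ, (volume (Ω ∩ Set.Icc t (t + 1 / W))).toReal :=
    mul_nonneg hW.le (Real.iSup_nonneg fun _ => ENNReal.toReal_nonneg)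
  calc ∫ t in Ω, ‖f t‖ = ∫ t in Ω, ‖k t‖ := by
        apply integral_congr_ae
        filter_upwards [ae_restrict_of_ae hfk] with t ht
        rw [sub_eq_zero.1 ht]
    _ ≤ _ := hk2
    _ ≤ (W * ⨆ t : ℝ, (volume (Ω ∩ Set.Icc t (t + 1 / W))).toReal) *
        (Real.pi / 2 * ∫ t, ‖f t‖) := mul_le_mul_of_nonneg_left hu1 hM
    _ = _ := by ring

/-- **Donoho–Logan large sieve for the Paley–Wiener space.**
Let `W > 0` and let `f ∈ L¹(ℝ)` have (distributional) Fourier transform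
`f̂(ξ) = ∫ f(t) e^{-iξt} dt` supported in `[-πW, πW]`.  With the maximum Nyquist density
`ρ_ℝ(Ω, W) = W · sup_t |Ω ∩ [t, t + 1/W]|`, one has
`∫_Ω |f| ≤ (π/2) · ρ_ℝ(Ω, W) · ∫_ℝ |f|`; in particular, if `ρ_ℝ(Ω, W) < 1/π`
(and `f` is nonzero) then `‖f·χ_Ω‖₁ < (1/2) ‖f‖₁`. -/
theorem donoho_logan_large_sieve_paley_wiener
    (W : ℝ) (hW : 0 < W)
    (f : ℝ → ℂ) (hf : Integrable f volume)
    (hsupp : ∀ ξ : ℝ, ξ ∉ Set.Icc (-(Real.pi * W)) (Real.pi * W) →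
      (∫ t : ℝ, f t * Complex.exp (-(Complex.I * ξ * t))) = 0)
    (Ω : Set ℝ) (hΩ : MeasurableSet Ω) :
    ((∫ t in Ω, ‖f t‖) ≤
      (Real.pi / 2) * (W * ⨆ t : ℝ, (volume (Ω ∩ Set.Icc t (t + 1 / W))).toReal) *
        (∫ t : ℝ, ‖f t‖)) ∧
    ((W * ⨆ t : ℝ, (volume (Ω ∩ Set.Icc t (t + 1 / W))).toReal) < 1 / Real.pi →
      ¬ (f =ᵐ[volume] (0 : ℝ → ℂ)) →
      (∫ t in Ω, ‖f t‖) < (1 / 2) * ∫ t : ℝ, ‖f t‖) := by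
  have hmain := dl_main W hW f hf hsupp Ω hΩ
  refine ⟨hmain, fun hρ hne => lt_of_le_of_lt hmain ?_⟩
  have hpos : 0 < ∫ t : ℝ, ‖f t‖ := by
    refine lt_of_le_of_ne (integral_nonneg fun _ => norm_nonneg _) fun h => hne ?_
    have h0 := (integral_eq_zero_iff_of_nonneg (fun _ => norm_nonneg _) hf.norm).1 h.symm
    filter_upwards [h0] with t ht
    simpa using ht
  apply mul_lt_mul_of_pos_right _ hpos
  calc Real.pi / 2 * _ < Real.pi / 2 * (1 / Real.pi) :=
        mul_lt_mul_of_pos_left hρ (by positivity)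
    _ = 1 / 2 := by field_simp
end

section
/- (Seip's local reproducing formula) Let α > 1, 0 < R < 1, and let f be analytic on the unit disc 𝔻 with (1/π)∫_𝔻 |f(w)| (1−|w|²)^{α−2} dw < ∞ (f ∈ A¹_α(𝔻)). Then for every z ∈ 𝔻: f(z) = C^α(R)^{−1} · (1/π) ∫_{B_{ϱ_𝔻}(z,R)} f(w) (1 − z w̄)^{−α} (1−|w|²)^{α−2} dw, where C^α(R) = (1/(α−1))(1 − (1−R²)^{α−1}) and B_{ϱ_𝔻}(z,R) = {w ∈ 𝔻 : |(z−w)/(1−z̄w)| < R} is the pseudohyperbolic ball of center z and radius R. -/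
open MeasureTheory

/-- The pseudohyperbolic ball `B_{ϱ_𝔻}(z, R) = {w ∈ 𝔻 : |(z - w)/(1 - z̄ w)| < R}`. -/
def pseudohyperbolicBall (z : ℂ) (R : ℝ) : Set ℂ :=
  {w : ℂ | ‖w‖ < 1 ∧ ‖(z - w) / (1 - starRingEnd ℂ z * w)‖ < R}


lemma seip_radial_real (α : ℝ) (hα : 1 < α) (R : ℝ) (hR0 : 0 < R) (hR1 : R < 1) :
    ∫ r in Set.Ioo 0 R, r * (1 - r ^ 2) ^ (α - 2) =
      2⁻¹ * ((1 / (α - 1)) * (1 - (1 - R ^ 2) ^ (α - 1))) := by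
  rw [← integral_Ioc_eq_integral_Ioo, ← intervalIntegral.integral_of_le hR0.le]
  have hpos : ∀ r ∈ Set.uIcc 0 R, 0 < 1 - r ^ 2 := by
    intro r hr
    rw [Set.uIcc_of_le hR0.le] at hr
    nlinarith [hr.1, hr.2]
  have hne : α - 1 ≠ 0 := by linarith
  have hd : ∀ r ∈ Set.uIcc 0 R, HasDerivAt
      (fun r : ℝ => -(2⁻¹ * (1 / (α - 1))) * (1 - r ^ 2) ^ (α - 1)) (r * (1 - r ^ 2) ^ (α - 2)) r := by
    intro r hr
    have h1 : HasDerivAt (fun r : ℝ => 1 - r ^ 2) (-(2 * r)) r := by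
      simpa using (hasDerivAt_pow 2 r).const_sub 1
    have h2 := (h1.rpow_const (p := α - 1) (Or.inl (hpos r hr).ne')).const_mul
      (-(2⁻¹ * (1 / (α - 1))))
    rw [show α - 1 - 1 = α - 2 by ring] at h2
    refine h2.congr_deriv ?_
    field_simp
  rw [intervalIntegral.integral_eq_sub_of_hasDerivAt hd]
  · simp; ring
  · apply ContinuousOn.intervalIntegrable
    apply ContinuousOn.mul continuousOn_id
    exact ContinuousOn.rpow_const (by fun_prop) (fun r hr => Or.inl (hpos r hr).ne')

lemma seip_angular (g : ℂ → ℂ) (hg : DifferentiableOn ℂ g (Metric.ball 0 1)) (r : ℝ)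
    (h0 : 0 < r) (h1 : r < 1) :
    ∫ θ in Set.Ioo (-Real.pi) Real.pi, g (circleMap 0 r θ) = (2 * Real.pi : ℂ) * g 0 := by
  have hd : DiffContOnCl ℂ g (Metric.ball 0 |r|) := by
    rw [abs_of_pos h0]
    apply DifferentiableOn.diffContOnCl
    rw [closure_ball _ h0.ne']
    exact hg.mono (Metric.closedBall_subset_ball h1)
  have h := hd.circleAverage
  rw [Real.circleAverage_eq_integral_add (-Real.pi)] at h
  rw [intervalIntegral.integral_comp_add_right (fun θ => g (circleMap 0 r θ))] at h
  rw [← integral_Ioc_eq_integral_Ioo, ← intervalIntegral.integral_of_le (by linarith [Real.pi_pos])]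
  rw [← h]
  have : (Real.pi : ℂ) ≠ 0 := by exact_mod_cast Real.pi_ne_zero
  rw [show 0 + -Real.pi = -Real.pi by ring, show 2 * Real.pi + -Real.pi = Real.pi by ring,
    Complex.real_smul]
  push_cast
  field_simp

lemma seip_radial (α : ℝ) (hα : 1 < α) (R : ℝ) (hR0 : 0 < R) (hR1 : R < 1)
    (g : ℂ → ℂ) (hg : DifferentiableOn ℂ g (Metric.ball 0 1)) :
    ∫ u in Metric.ball (0 : ℂ) R, g u * (((1 - ‖u‖ ^ 2) ^ (α - 2) : ℝ) : ℂ) =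
      (Real.pi : ℂ) * (((1 / (α - 1)) * (1 - (1 - R ^ 2) ^ (α - 1)) : ℝ) : ℂ) * g 0 := by
  have hsymm : ∀ p : ℝ × ℝ, Complex.polarCoord.symm p = circleMap 0 p.1 p.2 := by
    intro p
    simp [circleMap, Complex.exp_mul_I]
  rw [← integral_indicator Metric.isOpen_ball.measurableSet,
    ← Complex.integral_comp_polarCoord_symm, polarCoord_target]
  set T := Set.Ioo (-Real.pi) Real.pi
  let F : ℝ × ℝ → ℂ := fun p => ((p.1 * (1 - p.1 ^ 2) ^ (α - 2) : ℝ) : ℂ) * g (circleMap 0 p.1 p.2)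
  have e1 : ∫ p in Set.Ioi (0:ℝ) ×ˢ T, p.1 • (Metric.ball (0 : ℂ) R).indicator
      (fun u => g u * (((1 - ‖u‖ ^ 2) ^ (α - 2) : ℝ) : ℂ)) (Complex.polarCoord.symm p) =
      ∫ p in Set.Ioo 0 R ×ˢ T, F p := by
    have hsub : Set.Ioo 0 R ×ˢ T ⊆ Set.Ioi (0:ℝ) ×ˢ T :=
      Set.prod_mono Set.Ioo_subset_Ioi_self subset_rfl
    rw [setIntegral_eq_of_subset_of_forall_sdiff_eq_zero
      (measurableSet_Ioi.prod measurableSet_Ioo) hsub]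
    · apply setIntegral_congr_fun (measurableSet_Ioo.prod measurableSet_Ioo)
      rintro ⟨r, θ⟩ ⟨hr, -⟩
      have hr0 : 0 < r := hr.1
      have hrR : r < R := hr.2
      simp only [hsymm]
      rw [Set.indicator_of_mem (by simp [abs_of_pos hr0, hrR])]
      simp [F, abs_of_pos hr0]
      ring
    · rintro ⟨r, θ⟩ ⟨⟨hr, hθ⟩, h⟩
      have hr0 : 0 < r := hr
      have : ¬ r < R := fun hh => h ⟨⟨hr0, hh⟩, hθ⟩
      simp only [hsymm]
      rw [Set.indicator_of_notMem (by simpa [abs_of_pos hr0] using this)]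
      simp
  have hint : IntegrableOn F (Set.Ioo 0 R ×ˢ T) (volume.prod volume) := by
    have hc : ContinuousOn F (Set.Icc 0 R ×ˢ Set.Icc (-Real.pi) Real.pi) := by
      have hp : ∀ p ∈ Set.Icc 0 R ×ˢ Set.Icc (-Real.pi) Real.pi, 0 < 1 - p.1 ^ 2 := by
        rintro ⟨r, θ⟩ ⟨hr, -⟩
        simp only at hr ⊢
        nlinarith [hr.1, hr.2]
      apply ContinuousOn.mul
      · apply Complex.continuous_ofReal.comp_continuousOn
        apply ContinuousOn.mul (by fun_prop)
        exact ContinuousOn.rpow_const (by fun_prop) (fun p hp' => Or.inl (hp p hp').ne')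
      · apply hg.continuousOn.comp
        · unfold circleMap; fun_prop
        · rintro ⟨r, θ⟩ ⟨hr, -⟩
          simp only at hr
          simp [abs_of_nonneg hr.1]
          linarith [hr.2]
    exact (hc.integrableOn_compact (μ := volume.prod volume) (isCompact_Icc.prod isCompact_Icc)).mono_set
      (Set.prod_mono Set.Ioo_subset_Icc_self Set.Ioo_subset_Icc_self)
  rw [e1, Measure.volume_eq_prod, setIntegral_prod F hint]
  have e2 : ∀ r ∈ Set.Ioo 0 R, ∫ θ in T, F (r, θ) =
      ((r * (1 - r ^ 2) ^ (α - 2) : ℝ) : ℂ) * ((2 * Real.pi : ℂ) * g 0) := by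
    intro r hr
    simp only [F]
    rw [integral_const_mul, seip_angular g hg r hr.1 (hr.2.trans hR1)]
  rw [setIntegral_congr_fun measurableSet_Ioo e2, integral_mul_const, integral_complex_ofReal,
    seip_radial_real α hα R hR0 hR1]
  push_cast
  ring

lemma seip_alg (α s t : ℝ) (hs : 0 < s) (ht : 0 < t) (a c : ℂ) (ha : 0 < a.re) :
    ((Complex.normSq (s / a ^ 2) : ℝ) : ℂ) * (c * ((s : ℂ) / starRingEnd ℂ a) ^ (-(α : ℂ)) *
      (((s * t / Complex.normSq a) ^ (α - 2) : ℝ) : ℂ)) =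
    (c * a ^ (-(α : ℂ))) * ((t ^ (α - 2) : ℝ) : ℂ) := by
  have ha0 : a ≠ 0 := by rintro rfl; simp at ha
  have hN : 0 < Complex.normSq a := Complex.normSq_pos.2 ha0
  have harg : a.arg ≠ Real.pi := by
    intro h
    rw [Complex.arg_eq_pi_iff] at h
    linarith [h.1]
  have harg' : (starRingEnd ℂ a).arg ≠ Real.pi := by
    intro h
    rw [Complex.arg_eq_pi_iff] at h
    simp at h
    linarith [h.1]
  have hA : a ^ (α : ℂ) ≠ 0 := by simp [Complex.cpow_eq_zero_iff, ha0]
  have h1 : ((s : ℂ) / starRingEnd ℂ a) ^ (-(α : ℂ)) =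
      ((s ^ (-α) : ℝ) : ℂ) * starRingEnd ℂ (a ^ (α : ℂ)) := by
    have hc0 : starRingEnd ℂ a ≠ 0 := by simpa using ha0
    have hs0 : (s : ℂ) ≠ 0 := by exact_mod_cast hs.ne'
    have hm : ((s : ℂ) * (starRingEnd ℂ a)⁻¹) ^ (-(α : ℂ)) =
        (s : ℂ) ^ (-(α : ℂ)) * ((starRingEnd ℂ a)⁻¹) ^ (-(α : ℂ)) := by
      rw [Complex.cpow_def_of_ne_zero (mul_ne_zero hs0 (inv_ne_zero hc0)),
        Complex.cpow_def_of_ne_zero hs0, Complex.cpow_def_of_ne_zero (inv_ne_zero hc0),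
        Complex.log_ofReal_mul hs (inv_ne_zero hc0), ← Complex.exp_add, Complex.ofReal_log hs.le]
      ring_nf
    rw [div_eq_mul_inv, hm, Complex.inv_cpow _ _ harg', Complex.cpow_neg (starRingEnd ℂ a), inv_inv,
      Complex.conj_cpow _ _ harg, Complex.conj_ofReal, Complex.ofReal_cpow hs.le]
    push_cast
    rfl
  have hNA : a ^ (α : ℂ) * starRingEnd ℂ (a ^ (α : ℂ)) = ((Complex.normSq a ^ α : ℝ) : ℂ) := by
    rw [Complex.mul_conj, Complex.normSq_eq_norm_sq, Complex.norm_cpow_real, Complex.normSq_eq_norm_sq,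
      ← Real.rpow_natCast, ← Real.rpow_natCast, ← Real.rpow_mul (norm_nonneg _),
      ← Real.rpow_mul (norm_nonneg _), mul_comm]
  set N := Complex.normSq a
  have hr : s ^ 2 / N ^ 2 * (s ^ (-α) * (s * t / N) ^ (α - 2)) * N ^ α = t ^ (α - 2) := by
    rw [Real.div_rpow (by positivity) hN.le, Real.mul_rpow hs.le ht.le, Real.rpow_sub hs,
      Real.rpow_sub hN, Real.rpow_neg hs.le, Real.rpow_two, Real.rpow_two]
    have := Real.rpow_pos_of_pos hs α
    have := Real.rpow_pos_of_pos hN α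
    field_simp
  have hn : Complex.normSq (s / a ^ 2) = s ^ 2 / N ^ 2 := by
    simp [N]; ring
  rw [h1, hn, Complex.cpow_neg, ← hr, Complex.ofReal_mul _ (N ^ α), ← hNA]
  push_cast
  field_simp


lemma seip_re_pos (z u : ℂ) (hz : ‖z‖ < 1) (hu : ‖u‖ < 1) : 0 < (1 - starRingEnd ℂ z * u).re := by
  have h : ‖starRingEnd ℂ z * u‖ < 1 := by
    rw [norm_mul, Complex.norm_conj]
    nlinarith [norm_nonneg z, norm_nonneg u]
  have := (Complex.re_le_norm (starRingEnd ℂ z * u))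
  simp only [Complex.sub_re, Complex.one_re]
  linarith

noncomputable def seipMob (z u : ℂ) : ℂ := (z - u) / (1 - starRingEnd ℂ z * u)

lemma seip_ne (z u : ℂ) (hz : ‖z‖ < 1) (hu : ‖u‖ < 1) : 1 - starRingEnd ℂ z * u ≠ 0 := by
  intro h
  have := seip_re_pos z u hz hu
  simp [h] at this

lemma seip_one_sub (z u : ℂ) (hz : ‖z‖ < 1) (hu : ‖u‖ < 1) :
    1 - starRingEnd ℂ z * seipMob z u = ((1 - ‖z‖ ^ 2 : ℝ) : ℂ) / (1 - starRingEnd ℂ z * u) := by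
  have h := seip_ne z u hz hu
  have hz2 : ((‖z‖ : ℂ)) ^ 2 = starRingEnd ℂ z * z := by
    rw [mul_comm, Complex.mul_conj, Complex.normSq_eq_norm_sq]; push_cast; rfl
  unfold seipMob
  push_cast
  rw [hz2]
  field_simp
  ring

lemma seip_one_sub' (z u : ℂ) (hz : ‖z‖ < 1) (hu : ‖u‖ < 1) :
    1 - z * starRingEnd ℂ (seipMob z u) =
      ((1 - ‖z‖ ^ 2 : ℝ) : ℂ) / starRingEnd ℂ (1 - starRingEnd ℂ z * u) := by
  have h := congrArg (starRingEnd ℂ) (seip_one_sub z u hz hu)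
  rw [map_div₀, Complex.conj_ofReal] at h
  rw [← h]
  simp

lemma seip_norm (z u : ℂ) (hz : ‖z‖ < 1) (hu : ‖u‖ < 1) :
    1 - ‖seipMob z u‖ ^ 2 =
      (1 - ‖z‖ ^ 2) * (1 - ‖u‖ ^ 2) / Complex.normSq (1 - starRingEnd ℂ z * u) := by
  have h := seip_ne z u hz hu
  have hN : Complex.normSq (1 - starRingEnd ℂ z * u) ≠ 0 := by simpa using h
  simp only [← Complex.normSq_eq_norm_sq, seipMob, map_div₀]
  rw [eq_div_iff hN, sub_mul, div_mul_cancel₀ _ hN, one_mul]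
  simp only [Complex.normSq_apply]
  simp
  ring

lemma seip_norm_lt (z u : ℂ) (hz : ‖z‖ < 1) (hu : ‖u‖ < 1) : ‖seipMob z u‖ < 1 := by
  have h := seip_norm z u hz hu
  have hN : 0 < Complex.normSq (1 - starRingEnd ℂ z * u) :=
    Complex.normSq_pos.2 (seip_ne z u hz hu)
  have h1 : 0 < 1 - ‖z‖ ^ 2 := by nlinarith [norm_nonneg z]
  have h2 : 0 < 1 - ‖u‖ ^ 2 := by nlinarith [norm_nonneg u]
  have h3 : 0 < 1 - ‖seipMob z u‖ ^ 2 := by rw [h]; positivity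
  nlinarith [norm_nonneg (seipMob z u)]

lemma seip_invol (z u : ℂ) (hz : ‖z‖ < 1) (hu : ‖u‖ < 1) : seipMob z (seipMob z u) = u := by
  have h := seip_ne z u hz hu
  have hs : ((1 - ‖z‖ ^ 2 : ℝ) : ℂ) ≠ 0 := by
    have : 0 < 1 - ‖z‖ ^ 2 := by nlinarith [norm_nonneg z]
    exact_mod_cast this.ne'
  rw [seipMob, seip_one_sub z u hz hu]
  have hz2 : ((‖z‖ : ℂ)) ^ 2 = starRingEnd ℂ z * z := by
    rw [mul_comm, Complex.mul_conj, Complex.normSq_eq_norm_sq]; push_cast; rfl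
  rw [div_div_eq_mul_div, div_eq_iff hs, seipMob, sub_mul, div_mul_cancel₀ _ h]
  push_cast
  rw [hz2]
  ring

lemma seip_deriv (z u : ℂ) (hz : ‖z‖ < 1) (hu : ‖u‖ < 1) :
    HasDerivAt (seipMob z)
      (-(((1 - ‖z‖ ^ 2 : ℝ) : ℂ) / (1 - starRingEnd ℂ z * u) ^ 2)) u := by
  have h := seip_ne z u hz hu
  have hz2 : ((‖z‖ : ℂ)) ^ 2 = starRingEnd ℂ z * z := by
    rw [mul_comm, Complex.mul_conj, Complex.normSq_eq_norm_sq]; push_cast; rfl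
  have h1 : HasDerivAt (fun u : ℂ => z - u) (-1) u := (hasDerivAt_id u).const_sub z
  have h2 : HasDerivAt (fun u : ℂ => 1 - starRingEnd ℂ z * u) (-(starRingEnd ℂ z)) u := by
    simpa using ((hasDerivAt_id u).const_mul (starRingEnd ℂ z)).const_sub 1
  refine (h1.div h2 h).congr_deriv ?_
  push_cast
  rw [hz2]
  field_simp
  ring

lemma seip_image (z : ℂ) (hz : ‖z‖ < 1) (R : ℝ) (hR1 : R < 1) :
    seipMob z '' Metric.ball 0 R = pseudohyperbolicBall z R := by
  ext w
  constructor
  · rintro ⟨u, hu, rfl⟩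
    have hu' : ‖u‖ < R := by simpa using hu
    refine ⟨seip_norm_lt z u hz (hu'.trans hR1), ?_⟩
    change ‖seipMob z (seipMob z u)‖ < R
    rwa [seip_invol z u hz (hu'.trans hR1)]
  · rintro ⟨hw, h⟩
    exact ⟨seipMob z w, mem_ball_zero_iff.2 h, seip_invol z w hz hw⟩

lemma seip_det (b : ℂ) :
    ((ContinuousLinearMap.toSpanSingleton ℂ b).restrictScalars ℝ).det = Complex.normSq b := by
  simp [ContinuousLinearMap.det, LinearMap.det_restrictScalars, Algebra.norm_complex_apply]

/-- **Seip's local reproducing formula for the Bergman space.**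
Let `α > 1`, `0 < R < 1`, and let `f ∈ A¹_α(𝔻)` be analytic on the unit disc with
`(1/π) ∫_𝔻 |f(w)| (1 - |w|²)^{α-2} dw < ∞`.  Then for every `z ∈ 𝔻`,
`f(z) = C^α(R)⁻¹ (1/π) ∫_{B_{ϱ_𝔻}(z,R)} f(w) (1 - z w̄)^{-α} (1 - |w|²)^{α-2} dw`,
where `C^α(R) = (1/(α-1))(1 - (1 - R²)^{α-1})`. -/
theorem seip_local_reproducing_formula
    (α : ℝ) (hα : 1 < α)
    (R : ℝ) (hR0 : 0 < R) (hR1 : R < 1)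
    (f : ℂ → ℂ) (hf : DifferentiableOn ℂ f (Metric.ball (0 : ℂ) 1))
    (hfint : IntegrableOn (fun w => ‖f w‖ * (1 - ‖w‖ ^ 2) ^ (α - 2))
      (Metric.ball (0 : ℂ) 1) volume) :
    ∀ z ∈ Metric.ball (0 : ℂ) 1,
      f z = (((((1 / (α - 1)) * (1 - (1 - R ^ 2) ^ (α - 1)))⁻¹ : ℝ)) : ℂ) *
        (((1 / Real.pi : ℝ)) : ℂ) *
        ∫ w in pseudohyperbolicBall z R,
          f w * (1 - z * starRingEnd ℂ w) ^ (-(α : ℂ)) *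
            (((1 - ‖w‖ ^ 2) ^ (α - 2) : ℝ) : ℂ) := by
  intro z hz
  have hz : ‖z‖ < 1 := by simpa using hz
  have hlt : ∀ u ∈ Metric.ball (0 : ℂ) R, ‖u‖ < 1 := fun u hu =>
    (mem_ball_zero_iff.1 hu).trans hR1
  rw [← seip_image z hz R hR1]
  rw [integral_image_eq_integral_abs_det_fderiv_smul volume Metric.isOpen_ball.measurableSet
    (f' := fun u => (ContinuousLinearMap.toSpanSingleton ℂ
      (-(((1 - ‖z‖ ^ 2 : ℝ) : ℂ) / (1 - starRingEnd ℂ z * u) ^ 2))).restrictScalars ℝ)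
    (fun u hu => ((seip_deriv z u hz (hlt u hu)).hasFDerivAt.restrictScalars ℝ).hasFDerivWithinAt)
    (fun u hu v hv huv => by
      rw [← seip_invol z u hz (hlt u hu), ← seip_invol z v hz (hlt v hv), huv])]
  let g : ℂ → ℂ := fun u => f (seipMob z u) * (1 - starRingEnd ℂ z * u) ^ (-(α : ℂ))
  have hg : DifferentiableOn ℂ g (Metric.ball 0 1) := by
    intro u hu
    have hu' : ‖u‖ < 1 := by simpa using hu
    have d1 : DifferentiableAt ℂ f (seipMob z u) :=
      hf.differentiableAt (Metric.isOpen_ball.mem_nhds (by simpa using seip_norm_lt z u hz hu'))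
    have d2 := d1.comp u (seip_deriv z u hz hu').differentiableAt
    have d3 : DifferentiableAt ℂ (fun u => (1 - starRingEnd ℂ z * u) ^ (-(α : ℂ))) u :=
      DifferentiableAt.cpow_const (by fun_prop) (Or.inl (seip_re_pos z u hz hu'))
    exact (d2.mul d3).differentiableWithinAt
  have e : ∀ u ∈ Metric.ball (0 : ℂ) R,
      |((ContinuousLinearMap.toSpanSingleton ℂ
      (-(((1 - ‖z‖ ^ 2 : ℝ) : ℂ) / (1 - starRingEnd ℂ z * u) ^ 2))).restrictScalars ℝ).det| •
        (f (seipMob z u) * (1 - z * starRingEnd ℂ (seipMob z u)) ^ (-(α : ℂ)) *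
            (((1 - ‖seipMob z u‖ ^ 2) ^ (α - 2) : ℝ) : ℂ)) =
      g u * (((1 - ‖u‖ ^ 2) ^ (α - 2) : ℝ) : ℂ) := by
    intro u hu
    have hu' := hlt u hu
    rw [seip_det, abs_of_nonneg (Complex.normSq_nonneg _), Complex.normSq_neg, Complex.real_smul,
      seip_one_sub' z u hz hu', seip_norm z u hz hu']
    exact seip_alg α _ _ (by nlinarith [norm_nonneg z]) (by nlinarith [norm_nonneg u]) _ _
      (seip_re_pos z u hz hu')
  rw [setIntegral_congr_fun Metric.isOpen_ball.measurableSet e, seip_radial α hα R hR0 hR1 g hg]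
  have hg0 : g 0 = f z := by simp [g, seipMob]
  have hC : (1 / (α - 1)) * (1 - (1 - R ^ 2) ^ (α - 1)) ≠ 0 := by
    have h1 : (1 - R ^ 2) ^ (α - 1) < 1 :=
      Real.rpow_lt_one (by nlinarith) (by nlinarith) (by linarith)
    have h2 : 0 < 1 / (α - 1) := by apply one_div_pos.2; linarith
    exact (mul_pos h2 (by linarith)).ne'
  rw [hg0]
  set C := (1 / (α - 1)) * (1 - (1 - R ^ 2) ^ (α - 1))
  have hC' : (C : ℂ) ≠ 0 := by exact_mod_cast hC
  have hpi : (Real.pi : ℂ) ≠ 0 := by exact_mod_cast Real.pi_ne_zero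
  push_cast
  field_simp
end
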